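/- arXiv:1410.6746 — 4 statements merged into one kernel-verified Lean document; each statement's English description precedes it below -/
import Mathlib

section
/- Let τ ∈ ∏_p ℤ_p. Then R_τ is a principal ideal domain if and only if for every nonzero h ∈ ℤ[x] the set S_h = { (p,k) : p prime, k ≥ 1, h(τ_p) ≡ 0 mod p^k } is finite. -/
open Polynomial

/-- The subset `R_τ` of `ℚ[X]`: quotients `h/n` with `h ∈ ℤ[X]`, `n` a positive integer,
such that for every prime `p` the evaluation `h(τ_p)` in the `p`-adic integers is divisible
by `p ^ v_p(n)`. -/
def RtauSet (τ : ∀ p : {p : ℕ // p.Prime}, @PadicInt p.1 ⟨p.2⟩) : Set (Polynomial ℚ) :=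
  {f | ∃ (h : Polynomial ℤ) (n : ℕ), n ≠ 0 ∧
    Polynomial.C (n : ℚ) * f = h.map (algebraMap ℤ ℚ) ∧
    ∀ p : {p : ℕ // p.Prime},
      letI : Fact p.1.Prime := ⟨p.2⟩
      ((p.1 : @PadicInt p.1 ⟨p.2⟩) ^ (n.factorization p.1)) ∣ Polynomial.aeval (τ p) h}

/-!
`R_τ` consists of the `f ∈ ℚ[X]` with `f(τ_p) ∈ ℤ_p` for every prime `p`. It is a Bézout domain:
inverting the nonzero integers turns it into the principal ideal domain `ℚ[X]`, and modulo a nonzero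
integer each of its elements is congruent to an integer, because `ℤ` is dense in `ℤ_p`. As a
Bézout domain, `R_τ` is a principal ideal domain iff it is factorial, iff chains of proper divisors
terminate.

`S_h` is the set of prime powers dividing `h` in `R_τ`. They are pairwise non-associated, so `S_h`
is finite when `R_τ` is factorial. Conversely, if all these sets are finite then `deg f + |S_f|`
decreases along proper divisors: a cofactor of degree zero that is not a unit is divisible by some
prime number `p`, so the product is divisible by a higher power of `p` than the divisor.
-/

section Divisibility

theorem wfDvdMonoid_of_rank {α : Type*} [CommMonoidWithZero α] (rank : α → ℕ)
    (rank_lt : ∀ a b, b ≠ 0 → DvdNotUnit a b → rank a < rank b) : WfDvdMonoid α := by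
  classical
  let rank' : α → WithTop ℕ := fun a => if a = 0 then ⊤ else rank a
  refine ⟨Subrelation.wf (r := InvImage (· < ·) rank') ?_ (InvImage.wf _ wellFounded_lt)⟩
  intro a b hab
  by_cases hb : b = 0
  · simp [InvImage, rank', hb, hab.1]
  · simpa [InvImage, rank', hb, hab.1] using rank_lt a b hb hab

theorem finite_setOf_associates_dvd {α : Type*} [CommMonoidWithZero α]
    [UniqueFactorizationMonoid α] {a : Associates α} (ha : a ≠ 0) :
    {d | d ∣ a}.Finite := by
  have : Fintype ↑{d | d ∣ a} := UniqueFactorizationMonoid.fintypeSubtypeDvd a ha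
  exact Set.toFinite _

variable {A S : Type*} [CommRing A] [CommRing S] [Algebra A S]

theorem exists_dvd_sub_algebraMap_of_prime [UniqueFactorizationMonoid A]
    (exists_of_prime : ∀ p : A, Prime p → ∀ s : S, ∃ a, algebraMap A S p ∣ s - algebraMap A S a)
    {m : A} (hm : m ≠ 0) (s : S) : ∃ a, algebraMap A S m ∣ s - algebraMap A S a := by
  induction m using UniqueFactorizationMonoid.induction_on_prime generalizing s with
  | h₁ => exact absurd rfl hm
  | h₂ u hu => exact ⟨0, (hu.map (algebraMap A S)).dvd⟩
  | h₃ m p hm₀ hp ih =>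
    obtain ⟨a, t, ht⟩ := exists_of_prime p hp s
    obtain ⟨b, u, hu⟩ := ih hm₀ t
    refine ⟨a + p * b, u, ?_⟩
    simp only [map_add, map_mul]
    linear_combination ht + algebraMap A S p * hu

theorem exists_mem_span_pair_dvd_of_isLocalization (N : Submonoid S) (hN : N ≤ nonZeroDivisors S)
    (B : Type*) [CommRing B] [IsBezout B] [Algebra S B] [IsLocalization N B] (f g : S) :
    ∃ n ∈ N, ∃ d ∈ Ideal.span {f, g}, d ∣ n * f ∧ d ∣ n * g := by
  classical
  set φ := algebraMap S B
  obtain ⟨u, hu⟩ := IsBezout.gcd_dvd_left (φ f) (φ g)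
  obtain ⟨v, hv⟩ := IsBezout.gcd_dvd_right (φ f) (φ g)
  obtain ⟨x, y, hxy⟩ := IsBezout.gcd_eq_sum (φ f) (φ g)
  obtain ⟨b, hb⟩ := IsLocalization.exist_integer_multiples_of_finset N {u, v, x, y}
  simp only [Finset.forall_mem_insert, Finset.mem_singleton, forall_eq, IsLocalization.IsInteger,
    RingHom.mem_rangeS, Algebra.smul_def] at hb
  obtain ⟨⟨u', hu'⟩, ⟨v', hv'⟩, ⟨x', hx'⟩, ⟨y', hy'⟩⟩ := hb
  refine ⟨b * b, (b * b).2, x' * f + y' * g, Ideal.mem_span_pair.2 ⟨x', y', rfl⟩,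
    ⟨u', ?_⟩, ⟨v', ?_⟩⟩
  all_goals
    apply IsLocalization.injective B hN
    simp only [map_add, map_mul, hu', hv', hx', hy']
  · linear_combination φ b ^ 2 * hu - φ b ^ 2 * u * hxy
  · linear_combination φ b ^ 2 * hv - φ b ^ 2 * v * hxy

theorem exists_dvd_and_eq_add_of_isBezout [IsBezout A] (k l m : A) :
    ∃ e, e ∣ k ∧ e ∣ l ∧ e ∣ m ∧ ∃ α β γ, α * k + β * l + γ * m = e := by
  obtain ⟨e, he⟩ := IsBezout.isPrincipal_of_FG (Ideal.span {k, l, m}) (Submodule.fg_span (by simp))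
  have e_dvd {a : A} (ha : a ∈ ({k, l, m} : Set A)) : e ∣ a :=
    Ideal.mem_span_singleton.1 (he.le (Ideal.subset_span ha))
  refine ⟨e, e_dvd (by simp), e_dvd (by simp), e_dvd (by simp), ?_⟩
  have he_mem : e ∈ Ideal.span {k, l, m} := he.ge (Ideal.mem_span_singleton_self e)
  simpa only [smul_eq_mul] using Submodule.mem_span_triple.1 he_mem

/- Think of `d` as `m * c`, so that `f / c` and `g / c` lie in `S`. Modulo `m` these quotients are
congruent to elements `k` and `l` of `A`, hence `(f, g) = (k, l, m) * c`, and `(k, l, m)` is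
generated by an element of `A`. -/
theorem isPrincipal_span_pair_of_dvd_mul [IsBezout A] {m : A}
    (hm : algebraMap A S m ∈ nonZeroDivisors S)
    (exists_dvd_sub : ∀ s : S, ∃ a, algebraMap A S m ∣ s - algebraMap A S a)
    {f g d : S} (hd : d ∈ Ideal.span {f, g})
    (hdf : d ∣ algebraMap A S m * f) (hdg : d ∣ algebraMap A S m * g) :
    (Ideal.span {f, g}).IsPrincipal := by
  set φ := algebraMap A S
  obtain ⟨u, hu⟩ := hdf
  obtain ⟨v, hv⟩ := hdg
  obtain ⟨k, s, hs⟩ := exists_dvd_sub u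
  obtain ⟨l, t, ht⟩ := exists_dvd_sub v
  obtain ⟨e, hek, hel, hem, α, β, γ, hαβγ⟩ := exists_dvd_and_eq_add_of_isBezout k l m
  obtain ⟨k', hk'⟩ := _root_.map_dvd φ hek
  obtain ⟨l', hl'⟩ := _root_.map_dvd φ hel
  obtain ⟨m', hm'⟩ := _root_.map_dvd φ hem
  replace hαβγ := congrArg φ hαβγ
  simp only [map_add, map_mul] at hαβγ
  let c := φ α * (f - s * d) + φ β * (g - t * d) + φ γ * d
  have m_mul_c : φ m * c = φ e * d := by
    linear_combination φ α * hu + φ β * hv + φ α * d * hs + φ β * d * ht + d * hαβγ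
  have he_reg : φ e ∈ nonZeroDivisors S := (mul_mem_nonZeroDivisors.1 (hm' ▸ hm)).1
  have d_eq : d = m' * c := by
    apply (mul_cancel_left_mem_nonZeroDivisors he_reg).1
    linear_combination -m_mul_c + c * hm'
  have f_eq : f = (k' + s * m') * c := by
    apply (mul_cancel_left_mem_nonZeroDivisors hm).1
    linear_combination hu + d * hs + d * hk' - k' * m_mul_c + φ m * s * d_eq
  have g_eq : g = (l' + t * m') * c := by
    apply (mul_cancel_left_mem_nonZeroDivisors hm).1
    linear_combination hv + d * ht + d * hl' - l' * m_mul_c + φ m * t * d_eq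
  refine ⟨c, le_antisymm (Ideal.span_le.2 ?_) ((Ideal.span_singleton_le_iff_mem _).2 ?_)⟩
  · rintro _ (rfl | rfl)
    · exact Ideal.mem_span_singleton'.2 ⟨_, f_eq.symm⟩
    · exact Ideal.mem_span_singleton'.2 ⟨_, g_eq.symm⟩
  · have hf : f ∈ Ideal.span {f, g} := Ideal.subset_span (by simp)
    have hg : g ∈ Ideal.span {f, g} := Ideal.subset_span (by simp)
    exact add_mem (add_mem (Ideal.mul_mem_left _ _ (sub_mem hf (Ideal.mul_mem_left _ _ hd)))
      (Ideal.mul_mem_left _ _ (sub_mem hg (Ideal.mul_mem_left _ _ hd)))) (Ideal.mul_mem_left _ _ hd)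

theorem isBezout_of_isLocalization [IsBezout A] (M : Submonoid A)
    (hM : Algebra.algebraMapSubmonoid S M ≤ nonZeroDivisors S)
    (B : Type*) [CommRing B] [IsBezout B] [Algebra S B]
    [IsLocalization (Algebra.algebraMapSubmonoid S M) B]
    (exists_dvd_sub : ∀ m ∈ M, ∀ s : S, ∃ a, algebraMap A S m ∣ s - algebraMap A S a) :
    IsBezout S := by
  refine IsBezout.iff_span_pair_isPrincipal.2 fun f g => ?_
  obtain ⟨_, ⟨m, hmM, rfl⟩, d, hd, hdf, hdg⟩ :=
    exists_mem_span_pair_dvd_of_isLocalization _ hM B f g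
  exact isPrincipal_span_pair_of_dvd_mul (hM ⟨m, hmM, rfl⟩) (exists_dvd_sub m hmM) hd hdf hdg

end Divisibility

section PrimePowerDivisors

variable {R : Type*}

/-- The pairs `(p, k)` with `p` a prime number, `k ≥ 1` and `p ^ k ∣ a` in `R`. When `R = R_τ` and
`a` is an integer polynomial `h`, this is the set `S_h`. -/
def primePowerDivisors [Semiring R] (a : R) : Set ({p : ℕ // p.Prime} × ℕ) :=
  {x | 1 ≤ x.2 ∧ (x.1.1 : R) ^ x.2 ∣ a}

theorem primePowerDivisors_subset_of_dvd [Semiring R] {a b : R} (hab : a ∣ b) :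
    primePowerDivisors a ⊆ primePowerDivisors b :=
  fun _ hx => ⟨hx.1, hx.2.trans hab⟩

theorem exists_not_pow_dvd_of_finite_primePowerDivisors [Semiring R] {a : R}
    (ha : (primePowerDivisors a).Finite) (p : {p : ℕ // p.Prime}) : ∃ k, ¬(p.1 : R) ^ k ∣ a := by
  by_contra! pow_dvd
  exact Set.infinite_of_injective_forall_mem (s := primePowerDivisors a)
    (f := fun k => (p, k + 1)) (fun k l hkl => by simpa using hkl)
    (fun k => ⟨k.succ_pos, pow_dvd (k + 1)⟩) ha

theorem primePowerDivisors_ssubset_mul [CommSemiring R] {a c : R}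
    (ha : (primePowerDivisors a).Finite) {p : {p : ℕ // p.Prime}} (hpc : (p.1 : R) ∣ c) :
    primePowerDivisors a ⊂ primePowerDivisors (a * c) := by
  refine ⟨primePowerDivisors_subset_of_dvd (dvd_mul_right a c), fun hsub => ?_⟩
  have pow_dvd (k : ℕ) : (p.1 : R) ^ k ∣ a := by
    induction k with
    | zero => simp
    | succ k ih =>
      have hmul : (p.1 : R) ^ (k + 1) ∣ a * c := pow_succ (p.1 : R) k ▸ mul_dvd_mul ih hpc
      exact (hsub (a := (p, k + 1)) ⟨k.succ_pos, hmul⟩).2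
  obtain ⟨k, hk⟩ := exists_not_pow_dvd_of_finite_primePowerDivisors ha p
  exact hk (pow_dvd k)

theorem finite_primePowerDivisors [CommSemiring R] [UniqueFactorizationMonoid R]
    (natCast_dvd : ∀ m n : ℕ, (m : R) ∣ n → m ∣ n) {a : R} (ha : a ≠ 0) :
    (primePowerDivisors a).Finite := by
  refine Set.Finite.of_injOn (f := fun x => Associates.mk ((x.1.1 : R) ^ x.2))
    (t := {d | d ∣ Associates.mk a}) (fun x hx => Associates.mk_dvd_mk.2 hx.2) ?_
    (finite_setOf_associates_dvd (Associates.mk_ne_zero.2 ha))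
  rintro ⟨p, k⟩ ⟨hk, -⟩ ⟨q, l⟩ ⟨hl, -⟩ hpq
  obtain ⟨hdvd, hdvd'⟩ := (Associates.mk_eq_mk_iff_associated.1 hpq).dvd_dvd
  have pow_eq : p.1 ^ k = q.1 ^ l :=
    Nat.dvd_antisymm (natCast_dvd _ _ (by exact_mod_cast hdvd))
      (natCast_dvd _ _ (by exact_mod_cast hdvd'))
  obtain ⟨hp, rfl⟩ := p.2.pow_inj' q.2 (by omega) (by omega) pow_eq
  exact Prod.ext (Subtype.ext hp) rfl

end PrimePowerDivisors

section Rtau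

local instance factPrimeVal (p : {p : ℕ // p.Prime}) : Fact p.1.Prime := ⟨p.2⟩

theorem padicInt_isUnit_natCast_iff {p : ℕ} [Fact p.Prime] {n : ℕ} :
    IsUnit (n : ℤ_[p]) ↔ p.Coprime n := by
  rw [PadicInt.isUnit_iff, PadicInt.norm_natCast_eq_one_iff]

theorem padicInt_natCast_dvd_iff {p : ℕ} [hp : Fact p.Prime] {n : ℕ} (hn : n ≠ 0) {z : ℤ_[p]} :
    (n : ℤ_[p]) ∣ z ↔ (p : ℤ_[p]) ^ n.factorization p ∣ z := by
  have hu := padicInt_isUnit_natCast_iff.2 (Nat.coprime_ordCompl hp.out hn)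
  conv_lhs => rw [← Nat.ordProj_mul_ordCompl_eq_self n p, Nat.cast_mul, Nat.cast_pow]
  exact hu.mul_right_dvd

variable (τ : ∀ p : {p : ℕ // p.Prime}, ℤ_[p.1])

/-- The ring `R_τ`, as the subring of those `f ∈ ℚ[X]` whose value at `τ p` is a `p`-adic integer
for every prime `p`. -/
noncomputable def rtau : Subring ℚ[X] :=
  ⨅ p : {p : ℕ // p.Prime}, (PadicInt.subring p.1).comap (aeval (τ p : ℚ_[p.1]) : ℚ[X] →ₐ[ℚ] _)

variable {τ}

theorem mem_rtau {f : ℚ[X]} : f ∈ rtau τ ↔ ∀ p, ‖aeval (τ p : ℚ_[p.1]) f‖ ≤ 1 := by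
  simp [rtau, Subring.mem_iInf, PadicInt.mem_subring_iff]

namespace rtau

/-- Evaluation at `τ p`, as a map from `R_τ` to the `p`-adic integers. -/
noncomputable def evalAt (p : {p : ℕ // p.Prime}) : rtau τ →+* ℤ_[p.1] :=
  ((aeval (τ p : ℚ_[p.1]) : ℚ[X] →ₐ[ℚ] ℚ_[p.1]).toRingHom.comp (rtau τ).subtype).codRestrict
    (PadicInt.subring p.1) fun f => mem_rtau.1 f.2 p

theorem coe_evalAt (p : {p : ℕ // p.Prime}) (f : rtau τ) :
    (evalAt p f : ℚ_[p.1]) = aeval (τ p : ℚ_[p.1]) (f : ℚ[X]) := rfl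

theorem aeval_map_intCast (p : {p : ℕ // p.Prime}) (h : ℤ[X]) :
    aeval (τ p : ℚ_[p.1]) (h.map (algebraMap ℤ ℚ)) = (aeval (τ p) h : ℤ_[p.1]) :=
  (aeval_map_algebraMap ..).trans (aeval_algebraMap_apply ℚ_[p.1] (τ p) h)

/-- The inclusion of `ℤ[X]` in `R_τ`. -/
noncomputable def ofInt : ℤ[X] →+* rtau τ :=
  (mapRingHom (algebraMap ℤ ℚ)).codRestrict (rtau τ) fun h =>
    mem_rtau.2 fun p => (aeval_map_intCast p h).symm ▸ PadicInt.norm_le_one _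

theorem ofInt_injective : Function.Injective (ofInt : ℤ[X] →+* rtau τ) := fun _ _ h =>
  map_injective _ (algebraMap ℤ ℚ).injective_int (congrArg Subtype.val h)

theorem evalAt_ofInt (p : {p : ℕ // p.Prime}) (h : ℤ[X]) :
    evalAt p (ofInt h : rtau τ) = aeval (τ p) h :=
  Subtype.ext (aeval_map_intCast p h)

theorem natCast_dvd_iff {n : ℕ} (hn : n ≠ 0) {f : rtau τ} :
    (n : rtau τ) ∣ f ↔ ∀ p, (n : ℤ_[p.1]) ∣ evalAt p f := by
  refine ⟨fun h p => by simpa using _root_.map_dvd (evalAt p) h, fun h => ?_⟩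
  have hn' : (n : ℚ) ≠ 0 := by exact_mod_cast hn
  have hmem : C (n : ℚ)⁻¹ * (f : ℚ[X]) ∈ rtau τ := by
    refine mem_rtau.2 fun p => ?_
    obtain ⟨z, hz⟩ := h p
    have hn'' : (n : ℚ_[p.1]) ≠ 0 := by exact_mod_cast hn
    have : aeval (τ p : ℚ_[p.1]) (C (n : ℚ)⁻¹ * (f : ℚ[X])) = z := by
      simp [← coe_evalAt, hz, hn'']
    exact this ▸ PadicInt.norm_le_one z
  refine ⟨⟨_, hmem⟩, Subtype.ext ?_⟩
  change (f : ℚ[X]) = (n : ℚ[X]) * (C (n : ℚ)⁻¹ * f)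
  rw [← C_eq_natCast, ← mul_assoc, ← C_mul, mul_inv_cancel₀ hn', C_1, one_mul]

theorem prime_pow_dvd_iff {p : {p : ℕ // p.Prime}} {k : ℕ} {f : rtau τ} :
    (p.1 : rtau τ) ^ k ∣ f ↔ (p.1 : ℤ_[p.1]) ^ k ∣ evalAt p f := by
  rw [← Nat.cast_pow, natCast_dvd_iff (pow_ne_zero k p.2.ne_zero)]
  refine ⟨fun h => by simpa using h p, fun h q => ?_⟩
  obtain rfl | hpq := eq_or_ne p q
  · simpa using h
  · have hcop : q.1.Coprime (p.1 ^ k) := Nat.Coprime.pow_right k <|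
      (Nat.coprime_primes q.2 p.2).2 fun h => hpq (Subtype.ext h.symm)
    exact (padicInt_isUnit_natCast_iff.2 hcop).dvd

theorem prime_dvd_iff {p : {p : ℕ // p.Prime}} {f : rtau τ} :
    (p.1 : rtau τ) ∣ f ↔ ‖aeval (τ p : ℚ_[p.1]) (f : ℚ[X])‖ < 1 := by
  rw [← pow_one (p.1 : rtau τ), prime_pow_dvd_iff, pow_one, ← PadicInt.norm_lt_one_iff_dvd,
    PadicInt.norm_def, coe_evalAt]

theorem primePowerDivisors_ofInt (h : ℤ[X]) :
    primePowerDivisors (ofInt h : rtau τ) =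
      {x : {p : ℕ // p.Prime} × ℕ | 1 ≤ x.2 ∧ (x.1.1 : ℤ_[x.1.1]) ^ x.2 ∣ aeval (τ x.1) h} := by
  simp only [primePowerDivisors, prime_pow_dvd_iff, evalAt_ofInt]

theorem natCast_dvd_natCast {m n : ℕ} (hmn : (m : rtau τ) ∣ n) : m ∣ n := by
  refine (Nat.dvd_iff_prime_pow_dvd_dvd n m).2 fun p k hp hpk => ?_
  lift p to {p : ℕ // p.Prime} using hp
  have hpk_dvd : (p.1 : rtau τ) ^ k ∣ n :=
    .trans (by exact_mod_cast Nat.cast_dvd_cast (α := rtau τ) hpk) hmn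
  rw [prime_pow_dvd_iff, map_natCast, ← Int.cast_natCast n, PadicInt.pow_p_dvd_int_iff] at hpk_dvd
  exact_mod_cast hpk_dvd

theorem exists_prime_dvd_of_natDegree_eq_zero {f : rtau τ} (hf : f ≠ 0)
    (hdeg : (f : ℚ[X]).natDegree = 0) (hunit : ¬IsUnit f) :
    ∃ p : {p : ℕ // p.Prime}, (p.1 : rtau τ) ∣ f := by
  by_contra! not_dvd
  obtain ⟨c, hc⟩ := natDegree_eq_zero.1 hdeg
  have hc₀ : c ≠ 0 := by
    rintro rfl
    exact hf (Subtype.ext (by simp [← hc]))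
  have norm_c (p : {p : ℕ // p.Prime}) : ‖(c : ℚ_[p.1])‖ = 1 := by
    have norm_le := mem_rtau.1 f.2 p
    have norm_not_lt := mt prime_dvd_iff.2 (not_dvd p)
    rw [← hc, aeval_C, eq_ratCast] at norm_le norm_not_lt
    exact le_antisymm norm_le (not_lt.1 norm_not_lt)
  have hinv : C c⁻¹ ∈ rtau τ := mem_rtau.2 fun p => by simp [norm_c]
  exact hunit (IsUnit.of_mul_eq_one ⟨_, hinv⟩ (Subtype.ext (by
    change (f : ℚ[X]) * C c⁻¹ = 1
    rw [← hc, ← C_mul, mul_inv_cancel₀ hc₀, C_1])))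

theorem exists_natCast_mul_eq_map (f : ℚ[X]) :
    ∃ n : ℕ, n ≠ 0 ∧ ∃ h : ℤ[X], C (n : ℚ) * f = h.map (algebraMap ℤ ℚ) := by
  obtain ⟨b, hb, hbf⟩ := IsLocalization.integerNormalization_spec (nonZeroDivisors ℤ) f
  obtain ⟨c, hc⟩ := Int.dvd_natAbs_self (a := b)
  refine ⟨b.natAbs, Int.natAbs_ne_zero.2 (nonZeroDivisors.ne_zero hb),
    C c * IsLocalization.integerNormalization (nonZeroDivisors ℤ) f, ?_⟩
  rw [Polynomial.map_mul, hbf, ← Int.cast_natCast, hc]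
  simp [mul_assoc, mul_left_comm]

theorem mem_rtau_iff_of_natCast_mul_eq {n : ℕ} (hn : n ≠ 0) {h : ℤ[X]} {f : ℚ[X]}
    (hf : C (n : ℚ) * f = h.map (algebraMap ℤ ℚ)) :
    f ∈ rtau τ ↔ ∀ p : {p : ℕ // p.Prime},
      (p.1 : ℤ_[p.1]) ^ n.factorization p.1 ∣ aeval (τ p) h := by
  have hn' : (n : ℚ[X]) ≠ 0 := by exact_mod_cast hn
  have mem_iff_dvd : f ∈ rtau τ ↔ (n : rtau τ) ∣ ofInt h := by
    refine ⟨fun hmem => ⟨⟨f, hmem⟩, Subtype.ext hf.symm⟩, fun ⟨g, hg⟩ => ?_⟩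
    have : f = g := mul_left_cancel₀ hn' (hf.trans (congrArg Subtype.val hg))
    exact this ▸ g.2
  simp only [mem_iff_dvd, natCast_dvd_iff hn, evalAt_ofInt, padicInt_natCast_dvd_iff hn]

theorem coe_rtau : (rtau τ : Set ℚ[X]) = RtauSet τ := by
  ext f
  constructor
  · intro hf
    obtain ⟨n, hn, h, hnf⟩ := exists_natCast_mul_eq_map f
    exact ⟨h, n, hn, hnf, (mem_rtau_iff_of_natCast_mul_eq hn hnf).1 hf⟩
  · rintro ⟨h, n, hn, hnf, hdvd⟩
    exact (mem_rtau_iff_of_natCast_mul_eq hn hnf).2 hdvd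

theorem finite_primePowerDivisors_of_ofInt
    (H : ∀ h : ℤ[X], h ≠ 0 → (primePowerDivisors (ofInt h : rtau τ)).Finite)
    {f : rtau τ} (hf : f ≠ 0) : (primePowerDivisors f).Finite := by
  obtain ⟨n, hn, h, hnf⟩ := exists_natCast_mul_eq_map (f : ℚ[X])
  have hh : h ≠ 0 := by
    rintro rfl
    simp [hn, hf] at hnf
  have hdvd : f ∣ ofInt h := ⟨n, Subtype.ext (hnf.symm.trans (mul_comm ..))⟩
  exact (H h hh).subset (primePowerDivisors_subset_of_dvd hdvd)

theorem wfDvdMonoid_of_finite (H : ∀ f : rtau τ, f ≠ 0 → (primePowerDivisors f).Finite) :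
    WfDvdMonoid (rtau τ) := by
  refine wfDvdMonoid_of_rank
    (fun f => (f : ℚ[X]).natDegree + (primePowerDivisors f).ncard) ?_
  rintro a _ hb ⟨ha, c, hc, rfl⟩
  have hc₀ : c ≠ 0 := right_ne_zero_of_mul hb
  have hdeg : ((a * c : rtau τ) : ℚ[X]).natDegree =
      (a : ℚ[X]).natDegree + (c : ℚ[X]).natDegree := by
    rw [Subring.coe_mul, natDegree_mul (by simpa using ha) (by simpa using hc₀)]
  rw [hdeg]
  rcases Nat.eq_zero_or_pos (c : ℚ[X]).natDegree with hcdeg | hcdeg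
  · obtain ⟨p, hp⟩ := exists_prime_dvd_of_natDegree_eq_zero hc₀ hcdeg hc
    have := Set.ncard_lt_ncard (primePowerDivisors_ssubset_mul (H a ha) hp) (H _ hb)
    omega
  · have := Set.ncard_le_ncard (primePowerDivisors_subset_of_dvd (dvd_mul_right a c)) (H _ hb)
    omega

theorem exists_prime_dvd_sub_intCast (p : {p : ℕ // p.Prime}) (f : rtau τ) :
    ∃ k : ℤ, (p.1 : rtau τ) ∣ f - k := by
  refine ⟨(evalAt p f).zmodRepr, ?_⟩
  rw [← pow_one (p.1 : rtau τ), prime_pow_dvd_iff, pow_one, map_sub, Int.cast_natCast, map_natCast,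
    ← PadicInt.norm_lt_one_iff_dvd]
  exact PadicInt.norm_sub_zmodRepr_lt_one _

theorem exists_dvd_sub_intCast {m : ℤ} (hm : m ≠ 0) (f : rtau τ) :
    ∃ k : ℤ, algebraMap ℤ (rtau τ) m ∣ f - algebraMap ℤ (rtau τ) k := by
  refine exists_dvd_sub_algebraMap_of_prime (fun p hp f => ?_) hm f
  obtain ⟨k, hk⟩ := exists_prime_dvd_sub_intCast ⟨p.natAbs, Int.prime_iff_natAbs_prime.1 hp⟩ f
  refine ⟨k, .trans ?_ hk⟩
  simpa only [map_natCast] using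
    _root_.map_dvd (algebraMap ℤ (rtau τ)) (Int.dvd_natAbs_self (a := p))

theorem algebraMapSubmonoid_int_le :
    Algebra.algebraMapSubmonoid (rtau τ) (nonZeroDivisors ℤ) ≤ nonZeroDivisors (rtau τ) :=
  algebraMapSubmonoid_le_nonZeroDivisors_of_faithfulSMul _ le_rfl

instance isLocalization_polynomial_rat :
    IsLocalization (Algebra.algebraMapSubmonoid (rtau τ) (nonZeroDivisors ℤ)) ℚ[X] where
  map_units := by
    rintro ⟨_, m, hm, rfl⟩
    have hm' : IsUnit (m : ℚ) := .mk0 _ (Int.cast_ne_zero.2 (nonZeroDivisors.ne_zero hm))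
    simpa using hm'.map C
  surj f := by
    obtain ⟨n, hn, h, hnf⟩ := exists_natCast_mul_eq_map f
    have hn' : (n : ℤ) ∈ nonZeroDivisors ℤ := mem_nonZeroDivisors_of_ne_zero (by exact_mod_cast hn)
    refine ⟨⟨ofInt h, _, n, hn', rfl⟩, ?_⟩
    change f * algebraMap (rtau τ) ℚ[X] (algebraMap ℤ (rtau τ) n) = h.map (algebraMap ℤ ℚ)
    rw [← hnf, mul_comm]
    simp
  exists_of_eq {f g} hfg := ⟨1, by rw [Subtype.ext hfg]⟩

instance : IsBezout (rtau τ) :=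
  isBezout_of_isLocalization (nonZeroDivisors ℤ) algebraMapSubmonoid_int_le ℚ[X]
    fun _ hm => exists_dvd_sub_intCast (nonZeroDivisors.ne_zero hm)

theorem isPrincipalIdealRing_iff :
    IsPrincipalIdealRing (rtau τ) ↔
      ∀ h : ℤ[X], h ≠ 0 → (primePowerDivisors (ofInt h : rtau τ)).Finite := by
  constructor
  · intro _ h hh
    exact finite_primePowerDivisors (fun _ _ => natCast_dvd_natCast)
      ((map_ne_zero_iff ofInt ofInt_injective).2 hh)
  · intro H
    exact (IsBezout.TFAE.out 3 1).1
      (wfDvdMonoid_of_finite fun f => finite_primePowerDivisors_of_ofInt H)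

end rtau

end Rtau

/-- `R_τ` is a PID iff for each nonzero `h ∈ ℤ[X]` the set
`S_h = {(p,k) : p prime, k ≥ 1, p^k ∣ h(τ_p)}` is finite. -/
theorem stmt_9 (τ : ∀ p : {p : ℕ // p.Prime}, @PadicInt p.1 ⟨p.2⟩)
    (S : Subring (Polynomial ℚ)) (hS : (S : Set (Polynomial ℚ)) = RtauSet τ) :
    IsPrincipalIdealRing S ↔
      ∀ h : Polynomial ℤ, h ≠ 0 →
        {x : {p : ℕ // p.Prime} × ℕ | 1 ≤ x.2 ∧
          letI : Fact x.1.1.Prime := ⟨x.1.2⟩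
          ((x.1.1 : @PadicInt x.1.1 ⟨x.1.2⟩) ^ x.2) ∣ Polynomial.aeval (τ x.1) h}.Finite := by
  obtain rfl : S = rtau τ := SetLike.coe_injective (hS.trans rtau.coe_rtau.symm)
  simp only [rtau.isPrincipalIdealRing_iff, rtau.primePowerDivisors_ofInt]
end

section
/- There exist 2^ℵ₀ elements τ ∈ ∏_p ℤ_p such that R_τ is a principal ideal domain, and the corresponding rings R_τ include 2^ℵ₀ pairwise non-isomorphic rings. -/
open Polynomial

/-!
Suppose that every nonzero `h ∈ ℤ[X]` has all its values `h(τ_p)` nonzero and almost all of them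
units. Then a nonzero `f ∈ ℚ[X]` can be scaled by a rational so that `|f(τ_p)|_p = 1` for all `p`,
and such an `f` divides in `R_τ` whatever it divides in `ℚ[X]`. As `ℚ[X]` is the localization of
`R_τ` at the nonzero integers, each nonzero ideal of `R_τ` is such an `f` times an ideal containing
a positive integer `n`. The latter is generated by an integer, because `ℤ → R_τ / n R_τ` is onto.

Diagonalizing over the countable `ℤ[X]` yields residue classes `b_p` mod `p` such that every family
of transcendental `τ_p ≡ b_p` is of this kind. Finally, a homomorphism from `R_τ` to `ℚ[X]` is
determined by the image of `X`, so each isomorphism class contains only countably many of the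
pairwise distinct rings `R_τ`.
-/

open Cardinal Filter Function Set

universe u

section PrincipalIdeals

variable {R : Type*} [CommRing R]

theorem exists_natCast_dvd_sub_intCast
    (h : ∀ p : ℕ, p.Prime → ∀ x : R, ∃ a : ℤ, (p : R) ∣ x - a) {n : ℕ} (hn : n ≠ 0) (x : R) :
    ∃ a : ℤ, (n : R) ∣ x - a := by
  induction n using Nat.recOnMul generalizing x with
  | zero => exact absurd rfl hn
  | one => exact ⟨0, by simp⟩
  | prime p hp => exact h p hp x
  | mul m n ihm ihn =>
    obtain ⟨a, y, hy⟩ := ihm (left_ne_zero_of_mul hn) x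
    obtain ⟨b, z, hz⟩ := ihn (right_ne_zero_of_mul hn) y
    refine ⟨a + m * b, z, ?_⟩
    push_cast
    linear_combination hy + (m : R) * hz

theorem isPrincipal_of_natCast_mem {I : Ideal R} {n : ℕ} (hn : (n : R) ∈ I)
    (h : ∀ x : R, ∃ a : ℤ, (n : R) ∣ x - a) : I.IsPrincipal := by
  obtain ⟨e, he⟩ := (IsPrincipalIdealRing.principal (I.comap (Int.castRingHom R))).principal
  have intCast_mem_iff (a : ℤ) : (a : R) ∈ I ↔ e ∣ a := by
    rw [← Ideal.mem_span_singleton, Ideal.span, ← he, Ideal.mem_comap, eq_intCast]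
  refine ⟨(e : R), le_antisymm (fun x hx => ?_) ?_⟩
  · obtain ⟨a, hna⟩ := h x
    have ha : e ∣ a := by
      rw [← intCast_mem_iff, ← sub_sub_cancel x (a : R)]
      exact I.sub_mem hx (I.mem_of_dvd hna hn)
    have hen : (e : R) ∣ n := by
      simpa using (Int.castRingHom R).map_dvd ((intCast_mem_iff n).1 (by exact_mod_cast hn))
    exact Ideal.mem_span_singleton.2
      ((dvd_iff_dvd_of_dvd_sub (hen.trans hna)).2 ((Int.castRingHom R).map_dvd ha))
  · exact (Ideal.span_singleton_le_iff_mem I).2 ((intCast_mem_iff e).2 dvd_rfl)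

/- If `g` generates the extension of `I` to the localization and divides in `R` whatever it divides
there, then `I = g (I : g)`, and the colon ideal `(I : g)` meets `M`. -/
theorem isPrincipalIdealRing_of_isLocalization (M : Submonoid R) (A : Type*) [CommRing A]
    [Algebra R A] [IsLocalization M A] [IsPrincipalIdealRing A]
    (hgen : ∀ a : A, ∃ g : R, Associated a (algebraMap R A g) ∧
      ∀ y : R, algebraMap R A g ∣ algebraMap R A y → g ∣ y)
    (hmeet : ∀ J : Ideal R, ∀ m ∈ M, m ∈ J → J.IsPrincipal) : IsPrincipalIdealRing R := by
  refine ⟨fun I => ?_⟩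
  obtain ⟨a, ha⟩ := (IsPrincipalIdealRing.principal (I.map (algebraMap R A))).principal
  obtain ⟨g, hag, hg⟩ := hgen a
  replace ha : I.map (algebraMap R A) = Ideal.span {algebraMap R A g} := by
    rw [ha]
    exact le_antisymm (Ideal.span_singleton_le_span_singleton.2 hag.dvd')
      (Ideal.span_singleton_le_span_singleton.2 hag.dvd)
  have g_dvd : ∀ y ∈ I, g ∣ y := fun y hy =>
    hg y (Ideal.mem_span_singleton.1 (ha ▸ Ideal.mem_map_of_mem _ hy))
  obtain ⟨m, hmM, hmg⟩ : ∃ m ∈ M, m * g ∈ I := by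
    obtain ⟨⟨y, s⟩, hys⟩ := (IsLocalization.mem_map_algebraMap_iff M A).1
      (ha ▸ Ideal.mem_span_singleton_self (algebraMap R A g))
    rw [← map_mul] at hys
    obtain ⟨c, hc⟩ := IsLocalization.exists_of_eq (M := M) hys
    refine ⟨c * s, M.mul_mem c.2 s.2, ?_⟩
    rw [mul_assoc, mul_comm (s : R) g, hc]
    exact I.mul_mem_left _ y.2
  obtain ⟨e, he⟩ := (hmeet (Submodule.comap (LinearMap.mulRight R g) I) m hmM hmg).principal
  have mul_mem_iff (x : R) : x * g ∈ I ↔ e ∣ x := by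
    rw [← Ideal.mem_span_singleton, Ideal.span, ← he, Submodule.mem_comap,
      LinearMap.mulRight_apply]
  refine ⟨e * g, le_antisymm (fun y hy => ?_) ?_⟩
  · obtain ⟨x, rfl⟩ := g_dvd y hy
    rw [mul_comm g x] at hy ⊢
    exact Ideal.mem_span_singleton.2 (mul_dvd_mul_right ((mul_mem_iff x).1 hy) g)
  · exact (Ideal.span_singleton_le_iff_mem I).2 ((mul_mem_iff e).2 dvd_rfl)

end PrincipalIdeals

section Polynomials

theorem countable_polynomial (R : Type*) [Semiring R] [Countable R] : Countable R[X] :=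
  mk_le_aleph0_iff.1 (cardinalMk_le_max.trans (by simp))

theorem exists_natCast_mul_eq_map (f : ℚ[X]) :
    ∃ n : ℕ, n ≠ 0 ∧ ∃ h : ℤ[X], (n : ℚ[X]) * f = h.map (algebraMap ℤ ℚ) := by
  obtain ⟨b, hb, hbf⟩ := IsLocalization.integerNormalization_spec (nonZeroDivisors ℤ) f
  refine ⟨b.natAbs, Int.natAbs_ne_zero.2 (nonZeroDivisors.ne_zero hb),
    (b.sign : ℤ[X]) * IsLocalization.integerNormalization (nonZeroDivisors ℤ) f, ?_⟩
  rw [Polynomial.map_mul, hbf, zsmul_eq_mul, Polynomial.map_intCast, ← mul_assoc,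
    ← Int.cast_mul, Int.sign_mul_self_eq_natAbs, Int.cast_natCast]

variable {R : Subring ℚ[X]}

theorem coe_aeval_X (hX : X ∈ R) (h : ℤ[X]) :
    ((aeval (⟨X, hX⟩ : R) h : R) : ℚ[X]) = h.map (algebraMap ℤ ℚ) := by
  change R.subtype.toIntAlgHom (aeval ⟨X, hX⟩ h) = _
  rw [← aeval_algHom_apply, ← aeval_X_left_apply (h.map _), aeval_map_algebraMap]
  rfl

theorem isLocalization_of_X_mem (hX : X ∈ R) :
    IsLocalization (Algebra.algebraMapSubmonoid R (nonZeroDivisors ℕ)) ℚ[X] where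
  map_units := by
    rintro ⟨_, n, hn, rfl⟩
    have hn0 : (n : ℚ) ≠ 0 := Nat.cast_ne_zero.2 (nonZeroDivisors.ne_zero hn)
    simpa using (isUnit_iff_ne_zero.2 hn0).map (C : ℚ →+* ℚ[X])
  surj f := by
    obtain ⟨n, hn, h, hnf⟩ := exists_natCast_mul_eq_map f
    refine ⟨⟨aeval ⟨X, hX⟩ h, n, n, mem_nonZeroDivisors_of_ne_zero hn, by simp⟩, ?_⟩
    change f * ((n : R) : ℚ[X]) = (aeval (⟨X, hX⟩ : R) h : R)
    rw [coe_aeval_X, ← hnf, mul_comm]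
    simp
  exists_of_eq h := ⟨1, by rw [Subtype.ext h]⟩

variable {A : Type*} [Ring A] [IsAddTorsionFree A]

theorem ringHom_ext_of_X_mem (hX : X ∈ R) {φ ψ : R →+* A}
    (h : φ ⟨X, hX⟩ = ψ ⟨X, hX⟩) : φ = ψ := by
  ext f
  obtain ⟨n, hn, q, hnf⟩ := exists_natCast_mul_eq_map f
  have hf : n • f = aeval ⟨X, hX⟩ q := by
    ext1
    rw [coe_aeval_X, ← hnf, nsmul_eq_mul]
    simp
  have nsmul_map (θ : R →+* A) : n • θ f = aeval (θ ⟨X, hX⟩) q := by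
    rw [← map_nsmul, hf]
    exact (aeval_algHom_apply θ.toIntAlgHom _ q).symm
  exact nsmul_right_injective hn (by simp only [nsmul_map, h])

theorem countable_ringEquiv_subring_of_X_mem [Countable A] (hX : X ∈ R) :
    {S : Subring A | Nonempty (R ≃+* S)}.Countable := by
  have : Countable (R →+* A) :=
    Injective.countable (f := fun φ : R →+* A => φ ⟨X, hX⟩) fun _ _ => ringHom_ext_of_X_mem hX
  refine (countable_range (RingHom.range : (R →+* A) → Subring A)).mono ?_
  rintro S ⟨e⟩
  refine ⟨S.subtype.comp e, ?_⟩
  rw [RingHom.range_eq_map, ← Subring.map_map, ← RingHom.range_eq_map,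
    RingHom.range_eq_top.2 e.surjective, ← RingHom.range_eq_map, Subring.range_subtype]

end Polynomials

section Selection

theorem exists_forall_eventually_of_forall_finset {ι κ β : Type*} [Countable κ] [Nonempty β]
    {l : Filter ι} {ν : ι → ℕ} (hν : Tendsto ν l atTop) {P : κ → ι → β → Prop}
    (h : ∀ s : Finset κ, ∀ᶠ i in l, ∃ b, ∀ k ∈ s, P k i b) :
    ∃ b : ι → β, ∀ k, ∀ᶠ i in l, P k i (b i) := by
  classical
  obtain ⟨e, he⟩ := exists_injective_nat κ
  let Q (i : ι) (m : ℕ) : Prop := ∃ b, ∀ k, e k < m → P k i b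
  have hQ (m : ℕ) : ∀ᶠ i in l, Q i m := by
    have hfin : {k | e k < m}.Finite := (finite_Iio m).preimage he.injOn
    simpa [Q] using h hfin.toFinset
  choose b hb using fun i => Nat.findGreatest_spec (P := Q i) (Nat.zero_le (ν i)) (by simp [Q])
  refine ⟨b, fun k => ?_⟩
  filter_upwards [hν.eventually_ge_atTop (e k + 1), hQ (e k + 1)] with i hνi hQi
  exact hb i k (Nat.le_findGreatest hνi hQi)

theorem exists_subset_mk_eq_injOn {α β : Type u} {A : Set α} (hA : ℵ₀ < #A) {f : α → β}
    (hf : ∀ b, (f ⁻¹' {b}).Countable) : ∃ T ⊆ A, #T = #A ∧ InjOn f T := by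
  obtain ⟨T, hTA, hT⟩ := exists_subset_bijOn A f
  refine ⟨T, hTA, (mk_le_mk_of_subset hTA).antisymm ?_, hT.injOn⟩
  have hA_le : #A ≤ #T * ℵ₀ := by
    rw [mk_congr hT.equiv]
    refine mk_le_mk_mul_of_mk_preimage_le (imageFactorization f A) fun b => ?_
    exact (((hf b).preimage Subtype.val_injective).mono
      fun a ha => congrArg Subtype.val ha).le_aleph0
  by_contra! hlt
  exact (mul_lt_of_lt hA.le hlt hA).not_ge hA_le

end Selection

section Transcendental

theorem continuum_le_mk_transcendental_of_isOpen (R : Type*) [CommRing R] [IsDomain R] [Countable R]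
    {𝕜 : Type*} [NontriviallyNormedField 𝕜] [CompleteSpace 𝕜] [Algebra R 𝕜]
    [Module.IsTorsionFree R 𝕜]
    {U : Set 𝕜} (hU : IsOpen U) (hne : U.Nonempty) : 𝔠 ≤ #{x ∈ U | Transcendental R x} := by
  by_contra! hlt
  have hU_le : #U ≤ #{x ∈ U | Transcendental R x} + #{x : 𝕜 | IsAlgebraic R x} :=
    (mk_le_mk_of_subset fun x hx => (em (IsAlgebraic R x)).symm.imp_left (And.intro hx)).trans
      (mk_union_le _ _)
  have halg : #{x : 𝕜 | IsAlgebraic R x} < 𝔠 :=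
    (Algebraic.countable R 𝕜).le_aleph0.trans_lt aleph0_lt_continuum
  exact ((continuum_le_cardinal_of_isOpen 𝕜 hU hne).trans hU_le).not_gt
    (add_lt_of_lt aleph0_le_continuum hlt halg)

variable {p : ℕ} [Fact p.Prime]

theorem continuum_le_mk_transcendental_padicInt {U : Set ℤ_[p]} (hU : IsOpen U)
    (hne : U.Nonempty) : 𝔠 ≤ #{x ∈ U | Transcendental ℤ x} := by
  have h := continuum_le_mk_transcendental_of_isOpen ℤ
    (PadicInt.isOpenEmbedding_coe.isOpenMap U hU) (hne.image _)
  refine h.trans ((mk_le_mk_of_subset ?_).trans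
    (mk_image_le (f := ((↑) : ℤ_[p] → ℚ_[p]))))
  rintro _ ⟨⟨x, hxU, rfl⟩, hx⟩
  exact ⟨x, ⟨hxU, (transcendental_algebraMap_iff (R := ℤ)
    (FaithfulSMul.algebraMap_injective ℤ_[p] ℚ_[p])).1 hx⟩, rfl⟩

theorem isUnit_aeval_iff_of_norm_sub_lt_one {x : ℤ_[p]} {b : ℤ} (hx : ‖x - b‖ < 1) (h : ℤ[X]) :
    IsUnit (aeval x h) ↔ ¬ (p : ℤ) ∣ h.eval b := by
  have hdvd : (p : ℤ_[p]) ∣ aeval x h - (h.eval b : ℤ) := by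
    have haeval : ((h.eval b : ℤ) : ℤ_[p]) = aeval (b : ℤ_[p]) h := by
      simpa using (aeval_algebraMap_apply ℤ_[p] b h).symm
    rw [haeval, ← eval_map_algebraMap, ← eval_map_algebraMap]
    exact ((PadicInt.norm_lt_one_iff_dvd _).1 hx).trans (sub_dvd_eval_sub _ _ _)
  rw [← not_iff_not, not_not, PadicInt.not_isUnit_iff, PadicInt.norm_lt_one_iff_dvd,
    dvd_iff_dvd_of_dvd_sub hdvd, ← PadicInt.norm_lt_one_iff_dvd, PadicInt.norm_int_lt_one_iff_dvd]

end Transcendental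

local instance fact_prime_val (p : {p : ℕ // p.Prime}) : Fact p.1.Prime := ⟨p.2⟩

/-- The elements `τ = (τ_p)_p` of `∏_p ℤ_p`. -/
abbrev PadicFamily := ∀ p : {p : ℕ // p.Prime}, ℤ_[p.1]

/-- The condition under which `R_τ` is a principal ideal domain: for every nonzero `h ∈ ℤ[X]` only
finitely many prime powers `p ^ k` divide `h(τ_p)`. It is split into the finiteness in `k` for fixed
`p`, which says `h(τ_p) ≠ 0`, and the finiteness in `p`. -/
structure IsFinitelyDivisible (τ : PadicFamily) : Prop where
  transcendental (p) : Transcendental ℤ (τ p)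
  eventually_isUnit {h : ℤ[X]} : h ≠ 0 → ∀ᶠ p in cofinite, IsUnit (aeval (τ p) h)

theorem tendsto_val_cofinite_atTop (P : ℕ → Prop) :
    Tendsto (Subtype.val : {n // P n} → ℕ) cofinite atTop :=
  Nat.cofinite_eq_atTop ▸ Subtype.val_injective.tendsto_cofinite

theorem eventually_not_dvd_of_ne_zero {a : ℤ} (ha : a ≠ 0) :
    ∀ᶠ p : {p : ℕ // p.Prime} in cofinite, ¬ (p.1 : ℤ) ∣ a := by
  filter_upwards [(tendsto_val_cofinite_atTop _).eventually_gt_atTop a.natAbs] with p hp hdvd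
  exact hp.not_ge (Nat.le_of_dvd (Int.natAbs_pos.2 ha) (Int.natCast_dvd.1 hdvd))

theorem exists_forall_isFinitelyDivisible :
    ∃ b : {p : ℕ // p.Prime} → ℤ, ∀ τ : PadicFamily,
      (∀ p, ‖τ p - b p‖ < 1 ∧ Transcendental ℤ (τ p)) → IsFinitelyDivisible τ := by
  have := countable_polynomial ℤ
  obtain ⟨b, hb⟩ : ∃ b : {p : ℕ // p.Prime} → ℤ, ∀ h : {h : ℤ[X] // h ≠ 0},
      ∀ᶠ p in cofinite, ¬ (p.1 : ℤ) ∣ h.1.eval (b p) := by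
    refine exists_forall_eventually_of_forall_finset (κ := {h : ℤ[X] // h ≠ 0})
      (P := fun h p b => ¬ (p.1 : ℤ) ∣ h.1.eval b) (tendsto_val_cofinite_atTop _) fun s => ?_
    -- A single integer serves almost all primes.
    have hprod : ∏ h ∈ s, h.1 ≠ 0 := Finset.prod_ne_zero_iff.2 fun h _ => h.2
    obtain ⟨b, hb⟩ : ∃ b : ℤ, (∏ h ∈ s, h.1).eval b ≠ 0 := by
      contrapose! hprod
      exact Polynomial.funext (by simpa using hprod)
    rw [eval_prod, Finset.prod_ne_zero_iff] at hb
    filter_upwards [s.eventually_all.2 fun h hs => eventually_not_dvd_of_ne_zero (hb h hs)]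
      with p hp using ⟨b, hp⟩
  refine ⟨b, fun τ hτ => ⟨fun p => (hτ p).2, fun {h} hh => ?_⟩⟩
  filter_upwards [hb ⟨h, hh⟩] with p hp
  exact (isUnit_aeval_iff_of_norm_sub_lt_one (hτ p).1 h).2 hp

theorem continuum_le_mk_isFinitelyDivisible : 𝔠 ≤ #{τ | IsFinitelyDivisible τ} := by
  obtain ⟨b, hb⟩ := exists_forall_isFinitelyDivisible
  let S (p : {p : ℕ // p.Prime}) : Set ℤ_[p.1] :=
    {x ∈ Metric.ball (b p : ℤ_[p.1]) 1 | Transcendental ℤ x}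
  have hS (p) : 𝔠 ≤ #(S p) := continuum_le_mk_transcendental_padicInt Metric.isOpen_ball
    (Metric.nonempty_ball.2 one_pos)
  have hne : (Set.univ.pi S).Nonempty := univ_pi_nonempty_iff.2 fun p =>
    nonempty_coe_sort.1 (mk_ne_zero_iff.1 (continuum_pos.trans_le (hS p)).ne')
  have hsub : Set.univ.pi S ⊆ {τ | IsFinitelyDivisible τ} := fun τ hτ =>
    hb τ fun p => (hτ p trivial).imp_left mem_ball_iff_norm.1
  calc 𝔠 ≤ #(S ⟨2, Nat.prime_two⟩) := hS _
    _ = #(Function.eval ⟨2, Nat.prime_two⟩ '' Set.univ.pi S) := by rw [eval_image_univ_pi hne]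
    _ ≤ #(Set.univ.pi S) := mk_image_le
    _ ≤ #{τ | IsFinitelyDivisible τ} := mk_le_mk_of_subset hsub

theorem norm_natCast_prime_of_ne {p q : {p : ℕ // p.Prime}} (h : p ≠ q) :
    ‖(p.1 : ℚ_[q.1])‖ = 1 :=
  Padic.norm_natCast_eq_one_iff.2 ((Nat.coprime_primes q.2 p.2).2 (Subtype.val_injective.ne h.symm))

theorem exists_natCast_norm_eq {x : PadicFamily} (hx : ∀ p, x p ≠ 0)
    (hunit : ∀ᶠ p in cofinite, IsUnit (x p)) :
    ∃ m : ℕ, m ≠ 0 ∧ ∀ p, ‖(m : ℚ_[p.1])‖ = ‖x p‖ := by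
  have hfin : {p | ¬ IsUnit (x p)}.Finite := hunit
  refine ⟨∏ p ∈ hfin.toFinset, p.1 ^ (x p).valuation,
    Finset.prod_ne_zero_iff.2 fun p _ => pow_ne_zero _ p.2.ne_zero, fun q => ?_⟩
  have norm_pow_valuation : ‖(q.1 : ℚ_[q.1]) ^ (x q).valuation‖ = ‖x q‖ := by
    rw [Padic.norm_p_pow, PadicInt.norm_eq_zpow_neg_valuation (hx q)]
  push_cast
  rw [norm_prod, Finset.prod_eq_single q, norm_pow_valuation]
  · intro p _ hpq
    rw [norm_pow, norm_natCast_prime_of_ne hpq, one_pow]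
  · intro hq
    rw [norm_pow_valuation]
    exact PadicInt.isUnit_iff.1 (by simpa using hq)

/-- The ring `R_τ`, described as the ring of all `f ∈ ℚ[X]` with `f(τ_p) ∈ ℤ_p` for every `p`. -/
noncomputable def Rtau (τ : PadicFamily) : Subring ℚ[X] :=
  ⨅ p : {p : ℕ // p.Prime},
    (PadicInt.subring p.1).comap (aeval (τ p : ℚ_[p.1]) : ℚ[X] →ₐ[ℚ] ℚ_[p.1]).toRingHom

theorem aeval_coe_map_intCast {p : ℕ} [Fact p.Prime] (x : ℤ_[p]) (h : ℤ[X]) :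
    aeval (x : ℚ_[p]) (h.map (algebraMap ℤ ℚ)) = (aeval x h : ℤ_[p]) := by
  rw [aeval_map_algebraMap]
  exact aeval_algebraMap_apply ℚ_[p] x h

theorem norm_natCast_eq_zpow_neg_factorization (p : ℕ) [hp : Fact p.Prime] {n : ℕ} (hn : n ≠ 0) :
    ‖(n : ℚ_[p])‖ = (p : ℝ) ^ (-(n.factorization p : ℤ)) := by
  rw [Padic.norm_eq_zpow_neg_valuation (Nat.cast_ne_zero.2 hn), Padic.valuation_natCast,
    Nat.factorization_def _ hp.out]

namespace Rtau

variable {τ : PadicFamily}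

theorem mem_iff {f : ℚ[X]} : f ∈ Rtau τ ↔ ∀ p, ‖aeval (τ p : ℚ_[p.1]) f‖ ≤ 1 := by
  simp only [Rtau, Subring.mem_iInf, Subring.mem_comap]
  rfl

theorem coe_eq (τ : PadicFamily) : (Rtau τ : Set ℚ[X]) = RtauSet τ := by
  have dvd_iff {f : ℚ[X]} {h : ℤ[X]} {n : ℕ} (hn : n ≠ 0)
      (hnf : C (n : ℚ) * f = h.map (algebraMap ℤ ℚ)) (p : {p : ℕ // p.Prime}) :
      (p.1 : ℤ_[p.1]) ^ n.factorization p.1 ∣ aeval (τ p) h ↔ ‖aeval (τ p : ℚ_[p.1]) f‖ ≤ 1 := by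
    rw [← Ideal.mem_span_singleton, ← PadicInt.norm_le_pow_iff_mem_span_pow, PadicInt.norm_def,
      ← aeval_coe_map_intCast, ← hnf, ← norm_natCast_eq_zpow_neg_factorization p.1 hn]
    simpa using mul_le_iff_le_one_right (norm_pos_iff.2 (Nat.cast_ne_zero.2 hn))
  ext f
  rw [SetLike.mem_coe, mem_iff]
  constructor
  · intro hf
    obtain ⟨n, hn, h, hnf⟩ := exists_natCast_mul_eq_map f
    rw [← map_natCast C] at hnf
    exact ⟨h, n, hn, hnf, fun p => (dvd_iff hn hnf p).2 (hf p)⟩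
  · rintro ⟨h, n, hn, hnf, hdvd⟩ p
    exact (dvd_iff hn hnf p).1 (hdvd p)

theorem X_mem : X ∈ Rtau τ :=
  mem_iff.2 fun p => by simpa using PadicInt.norm_le_one (τ p)

theorem C_inv_pow_mul_mem_iff {f : ℚ[X]} (hf : f ∈ Rtau τ) (p : {p : ℕ // p.Prime}) (n : ℕ) :
    C ((p.1 : ℚ) ^ n)⁻¹ * f ∈ Rtau τ ↔ ‖aeval (τ p : ℚ_[p.1]) f‖ ≤ (p.1 : ℝ) ^ (-n : ℤ) := by
  have norm_aeval (q : {p : ℕ // p.Prime}) : ‖aeval (τ q : ℚ_[q.1]) (C ((p.1 : ℚ) ^ n)⁻¹ * f)‖ =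
      (‖(p.1 : ℚ_[q.1])‖ ^ n)⁻¹ * ‖aeval (τ q : ℚ_[q.1]) f‖ := by simp
  have hp : (0 : ℝ) < p.1 := Nat.cast_pos.2 p.2.pos
  have mem_iff_at_p : ‖aeval (τ p : ℚ_[p.1]) (C ((p.1 : ℚ) ^ n)⁻¹ * f)‖ ≤ 1 ↔
      ‖aeval (τ p : ℚ_[p.1]) f‖ ≤ (p.1 : ℝ) ^ (-n : ℤ) := by
    rw [norm_aeval, Padic.norm_p, inv_mul_le_iff₀ (by positivity), mul_one, zpow_neg, zpow_natCast,
      inv_pow]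
  refine ⟨fun h => mem_iff_at_p.1 (mem_iff.1 h p), fun h => mem_iff.2 fun q => ?_⟩
  obtain rfl | hpq := eq_or_ne p q
  · exact mem_iff_at_p.2 h
  · rw [norm_aeval, norm_natCast_prime_of_ne hpq, one_pow, inv_one, one_mul]
    exact mem_iff.1 hf q

theorem exists_intCast_dvd_sub {p : ℕ} (hp : p.Prime) (f : Rtau τ) :
    ∃ a : ℤ, (p : Rtau τ) ∣ f - a := by
  lift p to {p : ℕ // p.Prime} using hp
  let y : ℤ_[p.1] := ⟨aeval (τ p : ℚ_[p.1]) (f : ℚ[X]), mem_iff.1 f.2 p⟩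
  have hy : ‖y - (y.appr 1 : ℤ)‖ ≤ (p.1 : ℝ) ^ (-(1 : ℕ) : ℤ) :=
    (PadicInt.norm_le_pow_iff_mem_span_pow _ 1).2 (mod_cast PadicInt.appr_spec 1 y)
  have hmem : C ((p.1 : ℚ) ^ 1)⁻¹ * ((f - (y.appr 1 : ℤ) : Rtau τ) : ℚ[X]) ∈ Rtau τ := by
    rw [C_inv_pow_mul_mem_iff (SetLike.coe_mem _)]
    rw [PadicInt.norm_def] at hy
    simpa only [AddSubgroupClass.coe_sub, SubringClass.coe_intCast, map_sub, map_intCast,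
      PadicInt.coe_sub, PadicInt.coe_intCast] using hy
  refine ⟨y.appr 1, ⟨_, hmem⟩, Subtype.ext ?_⟩
  have hp0 : (p.1 : ℚ) ≠ 0 := Nat.cast_ne_zero.2 p.2.ne_zero
  rw [Subring.coe_mul, SubringClass.coe_natCast, ← map_natCast C, ← mul_assoc, ← C_mul, pow_one,
    mul_inv_cancel₀ hp0, C_1, one_mul]

theorem injective : Injective Rtau := by
  intro τ σ h
  have norm_sub_le_iff (τ : PadicFamily) (p : {p : ℕ // p.Prime}) (n a : ℕ) :
      C ((p.1 : ℚ) ^ n)⁻¹ * (X - (a : ℚ[X])) ∈ Rtau τ ↔ ‖τ p - a‖ ≤ (p.1 : ℝ) ^ (-n : ℤ) := by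
    rw [C_inv_pow_mul_mem_iff (sub_mem X_mem (natCast_mem _ a))]
    simp [PadicInt.norm_def]
  funext p
  refine PadicInt.ext_of_toZModPow.1 fun n => ?_
  have hτ := PadicInt.appr_spec n (τ p)
  have hσ : σ p - (τ p).appr n ∈ Ideal.span {(p.1 : ℤ_[p.1]) ^ n} := by
    rwa [← PadicInt.norm_le_pow_iff_mem_span_pow, ← norm_sub_le_iff, ← h, norm_sub_le_iff,
      PadicInt.norm_le_pow_iff_mem_span_pow]
  rw [← RingHom.sub_mem_ker_iff, PadicInt.ker_toZModPow]
  simpa using sub_mem hτ hσ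

theorem exists_associated_norm_eq_one (hτ : IsFinitelyDivisible τ) {f : ℚ[X]} (hf : f ≠ 0) :
    ∃ g : ℚ[X], Associated f g ∧ ∀ p, ‖aeval (τ p : ℚ_[p.1]) g‖ = 1 := by
  obtain ⟨n, hn, h, hnf⟩ := exists_natCast_mul_eq_map f
  have hh : h ≠ 0 := by
    rintro rfl
    simp [hn, hf] at hnf
  obtain ⟨m, hm, hmh⟩ := exists_natCast_norm_eq (x := fun p => aeval (τ p) h)
    (fun p => mt (transcendental_iff.1 (hτ.transcendental p) h) hh) (hτ.eventually_isUnit hh)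
  have hunit : IsUnit (C ((n : ℚ) / m)) :=
    (isUnit_iff_ne_zero.2 (div_ne_zero (Nat.cast_ne_zero.2 hn) (Nat.cast_ne_zero.2 hm))).map C
  refine ⟨C ((n : ℚ) / m) * f, (associated_unit_mul_right f _ hunit), fun p => ?_⟩
  have hm0 : ‖(m : ℚ_[p.1])‖ ≠ 0 := norm_ne_zero_iff.2 (Nat.cast_ne_zero.2 hm)
  calc ‖aeval (τ p : ℚ_[p.1]) (C ((n : ℚ) / m) * f)‖
      = ‖aeval (τ p : ℚ_[p.1]) ((n : ℚ[X]) * f)‖ / ‖(m : ℚ_[p.1])‖ := by simp; ring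
    _ = ‖aeval (τ p) h‖ / ‖(m : ℚ_[p.1])‖ := by rw [hnf, aeval_coe_map_intCast, PadicInt.norm_def]
    _ = 1 := by rw [← hmh, div_self hm0]

theorem dvd_of_coe_dvd {g y : Rtau τ} (hg : ∀ p, ‖aeval (τ p : ℚ_[p.1]) (g : ℚ[X])‖ = 1)
    (h : (g : ℚ[X]) ∣ y) : g ∣ y := by
  obtain ⟨q, hq⟩ := h
  have hqmem : q ∈ Rtau τ := mem_iff.2 fun p => by
    simpa [hq, hg] using mem_iff.1 y.2 p
  exact ⟨⟨q, hqmem⟩, Subtype.ext hq⟩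

theorem isPrincipalIdealRing (hτ : IsFinitelyDivisible τ) : IsPrincipalIdealRing (Rtau τ) := by
  have := isLocalization_of_X_mem (X_mem (τ := τ))
  refine isPrincipalIdealRing_of_isLocalization
    (Algebra.algebraMapSubmonoid (Rtau τ) (nonZeroDivisors ℕ)) ℚ[X] (fun f => ?_) ?_
  · obtain rfl | hf := eq_or_ne f 0
    · refine ⟨0, .rfl, fun y hy => ?_⟩
      rw [map_zero, zero_dvd_iff] at hy
      exact (Subtype.ext hy : y = 0) ▸ dvd_rfl
    · obtain ⟨g, hfg, hg⟩ := exists_associated_norm_eq_one hτ hf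
      lift g to Rtau τ using mem_iff.2 fun p => (hg p).le
      exact ⟨g, hfg, fun y => dvd_of_coe_dvd hg⟩
  · rintro J _ ⟨n, hn, rfl⟩ hnJ
    refine isPrincipal_of_natCast_mem (n := n) (by simpa using hnJ) ?_
    exact exists_natCast_dvd_sub_intCast (fun p hp => exists_intCast_dvd_sub hp)
      (nonZeroDivisors.ne_zero hn)

end Rtau

theorem mk_isFinitelyDivisible : #{τ | IsFinitelyDivisible τ} = 𝔠 := by
  refine le_antisymm ?_ continuum_le_mk_isFinitelyDivisible
  have := countable_polynomial ℚ
  calc #{τ | IsFinitelyDivisible τ} ≤ #PadicFamily := mk_set_le _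
    _ ≤ #(Set ℚ[X]) := mk_le_of_injective (SetLike.coe_injective.comp Rtau.injective)
    _ ≤ 𝔠 := by
      rw [mk_set, ← two_power_aleph0]
      exact power_le_power_left two_ne_zero mk_le_aleph0

/-- The relation of being isomorphic as abstract rings, on the subrings of a fixed ring. -/
def ringEquivSetoid (A : Type*) [Ring A] : Setoid (Subring A) where
  r R S := Nonempty (R ≃+* S)
  iseqv := ⟨fun _ => ⟨.refl _⟩, fun ⟨e⟩ => ⟨e.symm⟩, fun ⟨e⟩ ⟨e'⟩ => ⟨e.trans e'⟩⟩

theorem Rtau.countable_preimage_ringEquivClass (c : Quotient (ringEquivSetoid ℚ[X])) :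
    ((fun τ => Quotient.mk (ringEquivSetoid ℚ[X]) (Rtau τ)) ⁻¹' {c}).Countable := by
  obtain hempty | ⟨τ, rfl⟩ := Set.eq_empty_or_nonempty
    ((fun τ => Quotient.mk (ringEquivSetoid ℚ[X]) (Rtau τ)) ⁻¹' {c})
  · simp [hempty]
  have := countable_polynomial ℚ
  refine ((countable_ringEquiv_subring_of_X_mem (A := ℚ[X]) (X_mem (τ := τ))).preimage
    Rtau.injective).mono fun σ hσ => ?_
  exact Quotient.exact (s := ringEquivSetoid ℚ[X]) hσ.symm

/-- There are `2^ℵ₀` parameters `τ` for which `R_τ` is a PID, and among the corresponding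
rings there are `2^ℵ₀` pairwise non-isomorphic ones. -/
theorem stmt_10 :
    ∃ F : (∀ p : {p : ℕ // p.Prime}, @PadicInt p.1 ⟨p.2⟩) → Subring (Polynomial ℚ),
      (∀ τ, (F τ : Set (Polynomial ℚ)) = RtauSet τ) ∧
      ∃ T : Set (∀ p : {p : ℕ // p.Prime}, @PadicInt p.1 ⟨p.2⟩),
        Cardinal.mk T = 2 ^ Cardinal.aleph0 ∧
        (∀ τ ∈ T, IsPrincipalIdealRing (F τ)) ∧
        (∀ τ ∈ T, ∀ σ ∈ T, τ ≠ σ → IsEmpty (F τ ≃+* F σ)) := by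
  obtain ⟨T, hT, hTcard, hTinj⟩ := exists_subset_mk_eq_injOn
    (mk_isFinitelyDivisible ▸ aleph0_lt_continuum) Rtau.countable_preimage_ringEquivClass
  refine ⟨Rtau, Rtau.coe_eq, T, ?_, fun τ hτ => Rtau.isPrincipalIdealRing (hT hτ),
    fun τ hτ σ hσ hne => ⟨fun e => hne (hTinj hτ hσ (Quotient.sound ⟨e⟩))⟩⟩
  rw [hTcard, mk_isFinitelyDivisible, two_power_aleph0]
end

section
/- Let k be a positive integer and let b ∈ R_τ with b > 0 and deg(b) ≥ 1. Then there exists a ∈ R_τ with a > 0 such that every division chain of length l ≤ k starting from (a,b) in R_τ has last remainder r_l with deg(r_l) ≥ deg(b). -/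
open Polynomial

/-- A division chain of length `k` starting from `(a, b)`: `s 0 = a`, `s 1 = b`
(i.e. `r₋₁ = a`, `r₀ = b`), `q i` is the quotient `q_{i+1}`, `s (i+2)` is the remainder
`r_{i+1}`, and `r_{i-1} = q_{i+1} r_i + r_{i+1}` for all `i < k`. The last remainder
`r_k` is `s (k+1)`. -/
def DivChain {R : Type*} [CommRing R] (a b : R) (k : ℕ) (q s : ℕ → R) : Prop :=
  s 0 = a ∧ s 1 = b ∧ ∀ i < k, s i = q i * s (i + 1) + s (i + 2)

/-!
The remainders of a division chain are `A * a + B * b` for vectors `(A, B)` of which any two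
consecutive ones have determinant `±1`, starting from `(1, 0)` and `(0, 1)`. Passing to leading
coefficients sends such a path to a path in the Farey graph of `ℚ`, possibly with repeated
vertices: unless both vectors are constant, hence integral, their leading coefficients are
proportional.
As edges of the Farey graph do not cross, each step can enter at most one more of the nested cones
cut out by Fibonacci numbers. If `a` and `b` have the same degree and leading coefficients in the
ratio `fib (2 * k + 2) : fib (2 * k + 1)`, then a remainder of degree less than `deg b` requires
the leading coefficients of `(A, B)` to lie in the `k`-th cone, so more than `k` steps.
-/

section BezoutCoeff

variable {S : Type*} [CommRing S]

/-- The extended Euclid sequence of a division chain with quotients `q`: with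
`(A, B) = bezoutCoeff q i`, the `i`-th term of the chain starting from `(a, b)` is
`A * a + B * b`. -/
def bezoutCoeff (q : ℕ → S) : ℕ → S × S
  | 0 => (1, 0)
  | 1 => (0, 1)
  | n + 2 => bezoutCoeff q n - q n • bezoutCoeff q (n + 1)

/-- Adjacency in the Farey graph over `S`: the two vectors have determinant `1` or `-1`. -/
def FareyAdj (v w : S × S) : Prop :=
  v.1 * w.2 - v.2 * w.1 = 1 ∨ v.1 * w.2 - v.2 * w.1 = -1

/-- The change of coordinates under which `A * a + B * b` becomes `A' * a' + B' * b'` when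
`a = 2 * a' + b'` and `b = a' + b'`. It shifts the Fibonacci sequence by two. -/
def fibStep (v : S × S) : S × S :=
  (2 * v.1 + v.2, v.1 + v.2)

theorem DivChain.eq_bezoutCoeff {a b : S} {l : ℕ} {q s : ℕ → S} (h : DivChain a b l q s) :
    ∀ i ≤ l + 1, s i = (bezoutCoeff q i).1 * a + (bezoutCoeff q i).2 * b := by
  obtain ⟨h0, h1, hs⟩ := h
  intro i
  induction i using Nat.twoStepInduction with
  | zero => simp [h0, bezoutCoeff]
  | one => simp [h1, bezoutCoeff]
  | more n ih ih' =>
    intro hn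
    simp only [bezoutCoeff, Prod.fst_sub, Prod.snd_sub, Prod.smul_fst, Prod.smul_snd, smul_eq_mul]
    linear_combination ih (by omega) - q n * ih' (by omega) - hs n (by omega)

theorem fareyAdj_bezoutCoeff_succ (q : ℕ → S) (n : ℕ) :
    FareyAdj (bezoutCoeff q n) (bezoutCoeff q (n + 1)) := by
  induction n with
  | zero => simp [FareyAdj, bezoutCoeff]
  | succ n ih =>
    have hdet : ∀ v w : S × S, w.1 * (v - q n • w).2 - w.2 * (v - q n • w).1
        = -(v.1 * w.2 - v.2 * w.1) := fun v w => by
      simp only [Prod.fst_sub, Prod.snd_sub, Prod.smul_fst, Prod.smul_snd, smul_eq_mul]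
      ring
    rw [FareyAdj, bezoutCoeff, hdet, neg_inj, neg_eq_iff_eq_neg]
    exact ih.symm

theorem FareyAdj.map_fibStep {v w : S × S} (h : FareyAdj v w) :
    FareyAdj (fibStep v) (fibStep w) := by
  have hdet : (fibStep v).1 * (fibStep w).2
      - (fibStep v).2 * (fibStep w).1 = v.1 * w.2 - v.2 * w.1 := by
    simp only [fibStep]
    ring
  rwa [FareyAdj, hdet]

theorem bezoutCoeff_mem_prod {R : Subring S} {q : ℕ → S} (hq : ∀ i, q i ∈ R) (n : ℕ) :
    bezoutCoeff q n ∈ R.prod R := by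
  induction n using Nat.twoStepInduction with
  | zero => exact ⟨R.one_mem, R.zero_mem⟩
  | one => exact ⟨R.zero_mem, R.one_mem⟩
  | more n ih ih' =>
    exact sub_mem ih ⟨R.mul_mem (hq n) ih'.1, R.mul_mem (hq n) ih'.2⟩

theorem fibStep_mem_prod {R : Subring S} {v : S × S} (hv : v ∈ R.prod R) :
    fibStep v ∈ R.prod R :=
  ⟨R.add_mem (R.mul_mem (ofNat_mem R 2) hv.1) hv.2, R.add_mem hv.1 hv.2⟩

theorem FareyAdj.left_ne_zero [Nontrivial S] {v w : S × S} (h : FareyAdj v w) : v ≠ 0 := by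
  rintro rfl
  simp [FareyAdj] at h

theorem exists_natDegree_le_and_coeff_ne_zero {v : S[X] × S[X]} (hne : v ≠ 0) :
    ∃ d, v.1.natDegree ≤ d ∧ v.2.natDegree ≤ d ∧ (v.1.coeff d ≠ 0 ∨ v.2.coeff d ≠ 0) := by
  rcases le_total v.1.degree v.2.degree with hle | hle
  · have h₂ : v.2 ≠ 0 := fun h₂ => hne (Prod.ext (by simpa [h₂] using hle) h₂)
    exact ⟨_, natDegree_le_natDegree hle, le_rfl, .inr (leadingCoeff_ne_zero.2 h₂)⟩
  · have h₁ : v.1 ≠ 0 := fun h₁ => hne (Prod.ext h₁ (by simpa [h₁] using hle))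
    exact ⟨_, le_rfl, natDegree_le_natDegree hle, .inl (leadingCoeff_ne_zero.2 h₁)⟩

end BezoutCoeff

section OppositeLead

variable {A : Type*} [CommRing A] [LinearOrder A]

/-- The two polynomials have the same degree `d` and leading coefficients of opposite signs. -/
def OppositeLead (v : A[X] × A[X]) : Prop :=
  ∃ d, v.1.natDegree ≤ d ∧ v.2.natDegree ≤ d ∧ v.1.coeff d * v.2.coeff d < 0

variable [IsStrictOrderedRing A]

/-- `fibStep` pulls the closed cone of vectors with coordinates of opposite signs, without the
origin, back into the open one. -/
theorem oppositeLead_of_coeff_fibStep_mul_nonpos {v : A[X] × A[X]} {d : ℕ}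
    (h₁ : (fibStep v).1.natDegree ≤ d) (h₂ : (fibStep v).2.natDegree ≤ d)
    (hle : (fibStep v).1.coeff d * (fibStep v).2.coeff d ≤ 0)
    (hne : (fibStep v).1.coeff d ≠ 0 ∨ (fibStep v).2.coeff d ≠ 0) : OppositeLead v := by
  have hv₁ : v.1 = (fibStep v).1 - (fibStep v).2 := by simp only [fibStep]; ring
  have hv₂ : v.2 = (fibStep v).2 - v.1 := by simp only [fibStep]; ring
  have hd₁ : v.1.natDegree ≤ d := hv₁ ▸ (natDegree_sub_le _ _).trans (max_le h₁ h₂)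
  have hd₂ : v.2.natDegree ≤ d := hv₂ ▸ (natDegree_sub_le _ _).trans (max_le h₂ hd₁)
  refine ⟨d, hd₁, hd₂, ?_⟩
  rw [hv₂, hv₁, coeff_sub, coeff_sub, coeff_sub]
  generalize (fibStep v).1.coeff d = x at hle hne
  generalize (fibStep v).2.coeff d = y at hle hne
  have hsq : 0 < x * x + 2 * (y * y) := by
    rcases hne with hx | hy
    · linarith [mul_self_pos.2 hx, mul_self_nonneg y]
    · linarith [mul_self_nonneg x, mul_self_pos.2 hy]
  calc (x - y) * (y - (x - y)) = 3 * (x * y) - (x * x + 2 * (y * y)) := by ring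
    _ < 0 := by linarith

theorem OppositeLead.of_fibStep {v : A[X] × A[X]} (h : OppositeLead (fibStep v)) :
    OppositeLead v := by
  obtain ⟨d, h₁, h₂, hlt⟩ := h
  exact oppositeLead_of_coeff_fibStep_mul_nonpos h₁ h₂ hlt.le (.inl (left_ne_zero_of_mul hlt.ne))

theorem OppositeLead.of_fibStep_iterate {v : A[X] × A[X]} {m n : ℕ} (hmn : m ≤ n)
    (h : OppositeLead (fibStep^[n] v)) : OppositeLead (fibStep^[m] v) := by
  induction hmn with
  | refl => exact h
  | step _ ih => exact ih (.of_fibStep (Function.iterate_succ_apply' fibStep _ v ▸ h))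

/-- A vector along `(-fib (2 * n + 1), fib (2 * n + 2))` is sent by `fibStep^[n]` to one along
`(-1, 1)`. -/
theorem oppositeLead_fibStep_iterate_of_fib {n d : ℕ} {v : A[X] × A[X]}
    (h₁ : v.1.natDegree ≤ d) (h₂ : v.2.natDegree ≤ d)
    (hne : v.1.coeff d ≠ 0 ∨ v.2.coeff d ≠ 0)
    (hfib : (Nat.fib (2 * n + 2) : A) * v.1.coeff d + Nat.fib (2 * n + 1) * v.2.coeff d = 0) :
    OppositeLead (fibStep^[n] v) := by
  induction n generalizing v with
  | zero =>
    have hneg : v.1.coeff d = -v.2.coeff d := by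
      simpa [Nat.fib_two, add_eq_zero_iff_eq_neg] using hfib
    have hv₂ : v.2.coeff d ≠ 0 := by simpa [hneg] using hne
    refine ⟨d, h₁, h₂, ?_⟩
    rw [Function.iterate_zero_apply, hneg, neg_mul, neg_lt_zero]
    exact mul_self_pos.2 hv₂
  | succ n ih =>
    have hc₁ : (fibStep v).1.coeff d = 2 * v.1.coeff d + v.2.coeff d := by simp [fibStep]
    have hc₂ : (fibStep v).2.coeff d = v.1.coeff d + v.2.coeff d := by simp [fibStep]
    have hd₂ : (fibStep v).2.natDegree ≤ d := natDegree_add_le_of_degree_le h₁ h₂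
    have hd₁ : (fibStep v).1.natDegree ≤ d := by
      rw [show (fibStep v).1 = v.1 + (fibStep v).2 by simp only [fibStep]; ring]
      exact natDegree_add_le_of_degree_le h₁ hd₂
    rw [Function.iterate_succ_apply]
    refine ih hd₁ hd₂ ?_ ?_
    · rw [hc₁, hc₂]
      contrapose! hne
      constructor <;> linarith [hne.1, hne.2]
    · have hfib₃ : Nat.fib (2 * (n + 1) + 1) = Nat.fib (2 * n + 1) + Nat.fib (2 * n + 2) :=
        Nat.fib_add_two
      have hfib₄ : Nat.fib (2 * (n + 1) + 2) = Nat.fib (2 * n + 2) + Nat.fib (2 * (n + 1) + 1) :=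
        Nat.fib_add_two
      rw [hfib₄, hfib₃] at hfib
      push_cast at hfib
      rw [hc₁, hc₂]
      linear_combination hfib

theorem two_le_abs_sub_of_mul_neg {R : Subring A[X]}
    (hdisc : ∀ c, C c ∈ R → 0 < c → 1 ≤ c) {x y : A} (hx : C x ∈ R) (hy : C y ∈ R)
    (hxy : x * y < 0) : 2 ≤ |x - y| := by
  rcases mul_neg_iff.1 hxy with ⟨hx0, hy0⟩ | ⟨hx0, hy0⟩
  · have h₁ := hdisc x hx hx0
    have h₂ := hdisc (-y) (by simpa using hy) (neg_pos.2 hy0)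
    exact le_abs.2 (.inl (by linarith))
  · have h₁ := hdisc (-x) (by simpa using hx) (neg_pos.2 hx0)
    have h₂ := hdisc y hy hy0
    exact le_abs.2 (.inr (by linarith))

/-- Edges of the Farey graph do not cross. If `v` and `w` are both constant, the two products in
their determinant are of opposite signs and at least `1` in absolute value, so they cannot differ
by `1`; otherwise the top coefficient of the determinant vanishes, which makes the two products of
leading coefficients equal. -/
theorem FareyAdj.coeff_mul_coeff_nonpos {R : Subring A[X]}
    (hdisc : ∀ c, C c ∈ R → 0 < c → 1 ≤ c) {v w : A[X] × A[X]} (hv : v ∈ R.prod R)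
    (hw : w ∈ R.prod R) (h : FareyAdj v w) (hlead : OppositeLead w) {d : ℕ}
    (h₁ : v.1.natDegree ≤ d) (h₂ : v.2.natDegree ≤ d) : v.1.coeff d * v.2.coeff d ≤ 0 := by
  obtain ⟨e, hw₁, hw₂, hlt⟩ := hlead
  by_contra! hpos
  have hcoeff : (v.1 * w.2 - v.2 * w.1).coeff (d + e)
      = v.1.coeff d * w.2.coeff e - v.2.coeff d * w.1.coeff e := by
    rw [coeff_sub, coeff_mul_add_eq_of_natDegree_le h₁ hw₂, coeff_mul_add_eq_of_natDegree_le h₂ hw₁]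
  have hsign : (v.1.coeff d * w.2.coeff e) * (v.2.coeff d * w.1.coeff e) < 0 := by
    convert mul_neg_of_pos_of_neg hpos hlt using 1
    ring
  rcases Nat.eq_zero_or_pos (d + e) with hde | hde
  · obtain ⟨rfl, rfl⟩ : d = 0 ∧ e = 0 := by omega
    have hC : ∀ {f g : A[X]}, f ∈ R → g ∈ R → f.natDegree ≤ 0 → g.natDegree ≤ 0 →
        C (f.coeff 0 * g.coeff 0) ∈ R := fun hf hg hf0 hg0 => by
      rw [C_mul, ← eq_C_of_natDegree_le_zero hf0, ← eq_C_of_natDegree_le_zero hg0]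
      exact R.mul_mem hf hg
    have hgap := two_le_abs_sub_of_mul_neg hdisc (hC hv.1 hw.2 h₁ hw₂) (hC hv.2 hw.1 h₂ hw₁) hsign
    rw [← hcoeff] at hgap
    rcases h with h | h <;> norm_num [h] at hgap
  · have hdet : (v.1 * w.2 - v.2 * w.1).coeff (d + e) = 0 := by
      rcases h with h | h <;> simp only [h, coeff_neg, coeff_one, if_neg hde.ne', neg_zero]
    rw [sub_eq_zero.1 (hcoeff.symm.trans hdet)] at hsign
    exact hsign.not_ge (mul_self_nonneg _)

theorem FareyAdj.oppositeLead_fibStep_iterate {R : Subring A[X]}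
    (hdisc : ∀ c, C c ∈ R → 0 < c → 1 ≤ c) {v w : A[X] × A[X]} (hv : v ∈ R.prod R)
    (hw : w ∈ R.prod R) (h : FareyAdj v w) {n : ℕ} (hlead : OppositeLead (fibStep^[n + 1] w)) :
    OppositeLead (fibStep^[n] v) := by
  induction n generalizing v w with
  | zero =>
    obtain ⟨d, h₁, h₂, hne⟩ := exists_natDegree_le_and_coeff_ne_zero h.map_fibStep.left_ne_zero
    exact oppositeLead_of_coeff_fibStep_mul_nonpos h₁ h₂ (h.map_fibStep.coeff_mul_coeff_nonpos hdisc
      (fibStep_mem_prod hv) (fibStep_mem_prod hw) hlead h₁ h₂) hne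
  | succ n ih => exact ih (fibStep_mem_prod hv) (fibStep_mem_prod hw) h.map_fibStep hlead

theorem not_oppositeLead_fibStep_iterate_bezoutCoeff {R : Subring A[X]}
    (hdisc : ∀ c, C c ∈ R → 0 < c → 1 ≤ c) {q : ℕ → A[X]} (hq : ∀ i, q i ∈ R) (n : ℕ) :
    ¬ OppositeLead (fibStep^[n] (bezoutCoeff q (n + 1))) := by
  induction n with
  | zero => simp [OppositeLead, bezoutCoeff]
  | succ n ih =>
    exact fun h => ih ((fareyAdj_bezoutCoeff_succ q _).oppositeLead_fibStep_iterate hdisc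
      (bezoutCoeff_mem_prod hq _) (bezoutCoeff_mem_prod hq _) h)

theorem DivChain.degree_le_of_fib_mul_eq {R : Subring A[X]} (hdisc : ∀ c, C c ∈ R → 0 < c → 1 ≤ c)
    {a b : A[X]} {k l : ℕ} {q s : ℕ → A[X]} (hb : b ≠ 0) (ha : a.natDegree ≤ b.natDegree)
    (hab : (Nat.fib (2 * k + 1) : A) * a.coeff b.natDegree
      = Nat.fib (2 * k + 2) * b.leadingCoeff)
    (hlk : l ≤ k) (hq : ∀ i, q i ∈ R) (h : DivChain a b l q s) :
    b.degree ≤ (s (l + 1)).degree := by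
  by_contra! hlt
  obtain ⟨d, h₁, h₂, hne⟩ :=
    exists_natDegree_le_and_coeff_ne_zero (fareyAdj_bezoutCoeff_succ q (l + 1)).left_ne_zero
  refine not_oppositeLead_fibStep_iterate_bezoutCoeff hdisc hq l
    (OppositeLead.of_fibStep_iterate hlk (oppositeLead_fibStep_iterate_of_fib h₁ h₂ hne ?_))
  -- A drop below `b.degree` means that the leading terms of `a` and `b` cancel.
  have hcancel : (bezoutCoeff q (l + 1)).1.coeff d * a.coeff b.natDegree
      + (bezoutCoeff q (l + 1)).2.coeff d * b.leadingCoeff = 0 := by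
    rw [leadingCoeff, ← coeff_mul_add_eq_of_natDegree_le h₁ ha,
      ← coeff_mul_add_eq_of_natDegree_le h₂ le_rfl, ← coeff_add, ← h.eq_bezoutCoeff _ le_rfl]
    exact coeff_eq_zero_of_degree_lt <| hlt.trans_le <| degree_le_natDegree.trans <|
      Nat.cast_le.2 (Nat.le_add_left _ _)
  apply mul_right_cancel₀ (leadingCoeff_ne_zero.2 hb)
  linear_combination (Nat.fib (2 * k + 1) : A) * hcancel
    - (bezoutCoeff q (l + 1)).1.coeff d * hab

theorem stmt_17_general (R : Subring A[X]) (hdisc : ∀ c, C c ∈ R → 0 < c → 1 ≤ c)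
    (hdiv : ∀ n : ℕ, n ≠ 0 → ∀ f ∈ R, ∃ g ∈ R, (f - n * g).degree ≤ 0)
    (k : ℕ) {b : A[X]} (hb : b ∈ R) (hbdeg : 1 ≤ b.degree) :
    ∃ a ∈ R, 0 < a.leadingCoeff * b.leadingCoeff ∧ ∀ l ≤ k, ∀ q s : ℕ → A[X],
      (∀ i, q i ∈ R) → DivChain a b l q s → b.degree ≤ (s (l + 1)).degree := by
  -- `a` is `b * fib (2 * k + 2) / fib (2 * k + 1)`, up to a constant that brings it into `R`.
  have hn : Nat.fib (2 * k + 1) ≠ 0 := (Nat.fib_pos.2 (by omega)).ne'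
  obtain ⟨a, ha, hconst⟩ := hdiv _ hn _ (R.mul_mem (natCast_mem R (Nat.fib (2 * k + 2))) hb)
  have hcoeff : ∀ i, 0 < i →
      (Nat.fib (2 * k + 1) : A) * a.coeff i = Nat.fib (2 * k + 2) * b.coeff i := fun i hi => by
    have := coeff_eq_zero_of_degree_lt (hconst.trans_lt (Nat.cast_pos.2 hi))
    rw [coeff_sub, coeff_natCast_mul, coeff_natCast_mul] at this
    exact (sub_eq_zero.1 this).symm
  have hbpos : 0 < b.natDegree := natDegree_pos_iff_degree_pos.2 (zero_lt_one.trans_le hbdeg)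
  have hb0 : b ≠ 0 := ne_zero_of_natDegree_gt hbpos
  have hle : a.natDegree ≤ b.natDegree := natDegree_le_iff_coeff_eq_zero.2 fun i hi => by
    simpa [coeff_eq_zero_of_natDegree_lt hi, hn] using hcoeff i (hbpos.trans hi)
  have hpos : 0 < a.coeff b.natDegree * b.leadingCoeff := by
    have hm : 0 < (Nat.fib (2 * k + 2) : A) := Nat.cast_pos.2 (Nat.fib_pos.2 (by omega))
    refine pos_of_mul_pos_right ?_ (Nat.cast_nonneg (Nat.fib (2 * k + 1)))
    rw [← mul_assoc, hcoeff _ hbpos, mul_assoc]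
    exact mul_pos hm (mul_self_pos.2 (leadingCoeff_ne_zero.2 hb0))
  have hdeg : a.natDegree = b.natDegree :=
    natDegree_eq_of_le_of_coeff_ne_zero hle (left_ne_zero_of_mul hpos.ne')
  refine ⟨a, ha, by rwa [leadingCoeff, hdeg], fun l hlk q s hq h => ?_⟩
  exact h.degree_le_of_fib_mul_eq hdisc hb0 hle (hcoeff _ hbpos) hlk hq

end OppositeLead

section RtauRing

local instance (p : {p : ℕ // p.Prime}) : Fact p.1.Prime := ⟨p.2⟩

variable (τ : ∀ p : {p : ℕ // p.Prime}, @PadicInt p.1 ⟨p.2⟩)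

/-- `R_τ` as a subring of `ℚ[X]`: the polynomials `f` such that `f(τ_p)` is a `p`-adic integer
for every prime `p`. -/
noncomputable def rtauRing : Subring ℚ[X] :=
  ⨅ p : {p : ℕ // p.Prime}, (PadicInt.subring p.1).comap (aeval (τ p : ℚ_[p.1])).toRingHom

variable {τ}

theorem mem_rtauRing {f : ℚ[X]} : f ∈ rtauRing τ ↔ ∀ p, ‖aeval (τ p : ℚ_[p.1]) f‖ ≤ 1 := by
  simp only [rtauRing, Subring.mem_iInf, Subring.mem_comap, PadicInt.mem_subring_iff]
  rfl

theorem pow_factorization_dvd_aeval_iff {p : ℕ} [Fact p.Prime] (t : ℤ_[p]) {f : ℚ[X]} {h : ℤ[X]}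
    {n : ℕ} (hn : n ≠ 0) (hf : C (n : ℚ) * f = h.map (algebraMap ℤ ℚ)) :
    (p : ℤ_[p]) ^ n.factorization p ∣ aeval t h ↔ ‖aeval (t : ℚ_[p]) f‖ ≤ 1 := by
  have heval : ‖(n : ℚ_[p])‖ * ‖aeval (t : ℚ_[p]) f‖ = ‖aeval t h‖ := by
    rw [PadicInt.norm_def, ← norm_mul, ← map_natCast (algebraMap ℚ ℚ_[p]) n,
      ← aeval_C (t : ℚ_[p]), ← map_mul, hf, aeval_map_algebraMap]
    exact congrArg norm (aeval_algebraMap_apply ℚ_[p] t h)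
  have hnorm : ‖(n : ℚ_[p])‖ = (p : ℝ) ^ (-(n.factorization p : ℕ) : ℤ) := by
    rw [Padic.norm_eq_zpow_neg_valuation (Nat.cast_ne_zero.2 hn), Padic.valuation_natCast,
      Nat.factorization_def _ Fact.out]
  rw [← Ideal.mem_span_singleton, ← PadicInt.norm_le_pow_iff_mem_span_pow, ← heval, ← hnorm]
  exact mul_le_iff_le_one_right (norm_pos_iff.2 (Nat.cast_ne_zero.2 hn))

theorem exists_C_natCast_mul_eq_map (f : ℚ[X]) :
    ∃ (h : ℤ[X]) (n : ℕ), n ≠ 0 ∧ C (n : ℚ) * f = h.map (algebraMap ℤ ℚ) := by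
  obtain ⟨m, hm, hmf⟩ := IsLocalization.integerNormalization_spec (nonZeroDivisors ℤ) f
  refine ⟨C m.sign * IsLocalization.integerNormalization (nonZeroDivisors ℤ) f, m.natAbs,
    Int.natAbs_ne_zero.2 (nonZeroDivisors.ne_zero hm), ?_⟩
  rw [Polynomial.map_mul, hmf, map_C, zsmul_eq_mul, ← C_eq_intCast, ← mul_assoc, ← C_mul,
    eq_intCast, ← Int.cast_mul, Int.sign_mul_self_eq_natAbs, Int.cast_natCast]

theorem coe_rtauRing : (rtauRing τ : Set ℚ[X]) = RtauSet τ := by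
  ext f
  rw [SetLike.mem_coe, mem_rtauRing]
  constructor
  · intro hf
    obtain ⟨h, n, hn, hfh⟩ := exists_C_natCast_mul_eq_map f
    exact ⟨h, n, hn, hfh, fun p => (pow_factorization_dvd_aeval_iff (τ p) hn hfh).2 (hf p)⟩
  · rintro ⟨h, n, hn, hfh, hdvd⟩ p
    exact (pow_factorization_dvd_aeval_iff (τ p) hn hfh).1 (hdvd p)

theorem one_le_of_C_mem_rtauRing {c : ℚ} (hc : C c ∈ rtauRing τ) (hpos : 0 < c) : 1 ≤ c := by
  have hden : c.den = 1 := by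
    by_contra hne
    obtain ⟨p, hp, hpd⟩ := Nat.exists_prime_and_dvd hne
    have : Fact p.Prime := ⟨hp⟩
    have hnorm := mem_rtauRing.1 hc ⟨p, hp⟩
    rw [aeval_C, eq_ratCast, Padic.norm_rat_le_one_iff_padicValuation_le_one,
      Rat.padicValuation_le_one_iff] at hnorm
    exact hnorm hpd
  rw [← Rat.coe_int_num_of_den_eq_one hden]
  exact_mod_cast Int.add_one_le_of_lt (Rat.num_pos.2 hpos)

theorem C_inv_mul_mem_rtauRing {f : ℚ[X]} (hf : f ∈ rtauRing τ) (p : {p : ℕ // p.Prime})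
    (hlt : ‖aeval (τ p : ℚ_[p.1]) f‖ < 1) : C (p.1 : ℚ)⁻¹ * f ∈ rtauRing τ := by
  refine mem_rtauRing.2 fun r => ?_
  rw [map_mul, norm_mul, aeval_C, map_inv₀, map_natCast, norm_inv]
  rcases eq_or_ne r p with rfl | hrp
  · have hle : ‖aeval (τ r : ℚ_[r.1]) f‖ ≤ (r.1 : ℝ)⁻¹ := by
      rw [← zpow_neg_one, Padic.norm_le_pow_iff_norm_lt_pow_add_one]
      simpa using hlt
    rw [Padic.norm_p]
    exact inv_mul_le_one_of_le₀ hle (by positivity)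
  · rw [Padic.norm_natCast_eq_one_iff.2
      ((Nat.coprime_primes r.2 p.2).2 (Subtype.coe_ne_coe.2 hrp)), inv_one, one_mul]
    exact mem_rtauRing.1 hf r

theorem exists_degree_sub_prime_mul_le_zero (p : {p : ℕ // p.Prime}) {f : ℚ[X]}
    (hf : f ∈ rtauRing τ) : ∃ g ∈ rtauRing τ, (f - p.1 * g).degree ≤ 0 := by
  let z : ℤ_[p.1] := ⟨aeval (τ p : ℚ_[p.1]) f, mem_rtauRing.1 hf p⟩
  have hz : ‖aeval (τ p : ℚ_[p.1]) (f - (z.zmodRepr : ℚ[X]))‖ < 1 := by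
    have hlt := PadicInt.norm_sub_zmodRepr_lt_one z
    rw [PadicInt.norm_def, PadicInt.coe_sub, PadicInt.coe_natCast] at hlt
    rwa [map_sub, map_natCast]
  refine ⟨_, C_inv_mul_mem_rtauRing (sub_mem hf (natCast_mem _ _)) p hz, ?_⟩
  have hp : (p.1 : ℚ) ≠ 0 := Nat.cast_ne_zero.2 p.2.ne_zero
  rw [← mul_assoc, ← C_eq_natCast p.1, ← C_mul, mul_inv_cancel₀ hp, C_1, one_mul, sub_sub_cancel]
  exact degree_natCast_le _

theorem exists_degree_sub_natCast_mul_le_zero {n : ℕ} (hn : n ≠ 0) {f : ℚ[X]}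
    (hf : f ∈ rtauRing τ) : ∃ g ∈ rtauRing τ, (f - n * g).degree ≤ 0 := by
  induction n using induction_on_primes generalizing f with
  | zero => exact absurd rfl hn
  | one => exact ⟨f, hf, by simp⟩
  | prime_mul p n hp ih =>
    obtain ⟨g, hg, hfg⟩ := exists_degree_sub_prime_mul_le_zero ⟨p, hp⟩ hf
    obtain ⟨e, he, hge⟩ := ih (right_ne_zero_of_mul hn) hg
    refine ⟨e, he, ?_⟩
    have hsplit : f - (p * n : ℕ) * e = (f - p * g) + p * (g - n * e) := by
      push_cast
      ring
    rw [hsplit]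
    refine (degree_add_le _ _).trans (max_le hfg ?_)
    exact (degree_mul_le_of_le (degree_natCast_le p) hge).trans (zero_add _).le

end RtauRing

/-- For every `k ≥ 1` and every `b > 0` in `R_τ` of degree at least `1`, there is `a > 0`
in `R_τ` such that every division chain of length `l ≤ k` in `R_τ` starting from `(a, b)`
has last remainder of degree at least `deg b`. Positivity is taken in the ordering of
`R_τ` by sign of the leading coefficient. -/
theorem stmt_17 (τ : ∀ p : {p : ℕ // p.Prime}, @PadicInt p.1 ⟨p.2⟩)
    (k : ℕ) (hk : 1 ≤ k) (b : Polynomial ℚ) (hb : b ∈ RtauSet τ)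
    (hbpos : 0 < b.leadingCoeff) (hbdeg : 1 ≤ b.degree) :
    ∃ a : Polynomial ℚ, a ∈ RtauSet τ ∧ 0 < a.leadingCoeff ∧
      ∀ l : ℕ, 1 ≤ l → l ≤ k → ∀ q s : ℕ → Polynomial ℚ,
        (∀ i, q i ∈ RtauSet τ) → (∀ i, s i ∈ RtauSet τ) →
        DivChain a b l q s → b.degree ≤ (s (l + 1)).degree := by
  rw [← coe_rtauRing] at hb ⊢
  obtain ⟨a, ha, hpos, hchain⟩ := stmt_17_general (rtauRing τ)
    (fun _ => one_le_of_C_mem_rtauRing) (fun _ hn _ => exists_degree_sub_natCast_mul_le_zero hn)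
    k hb hbdeg
  exact ⟨a, ha, pos_of_mul_pos_left hpos hbpos.le, fun l _ hlk q s hq _ => hchain l hlk q s hq⟩
end

section
/- For every τ ∈ ∏_p ℤ_p and every positive integer k, the ring R_τ is not k-stage Euclidean: there is no norm N : R_τ → ℕ (with N(a) = 0 iff a = 0) such that for every (a,b) with b ≠ 0 there exists an l-stage division chain starting from (a,b), l ≤ k, whose last remainder r_l satisfies N(r_l) < N(b). -/
open Polynomial

/-!
Compare polynomials by degree, then by the absolute value of the leading coefficient. Since the
constants of `R_τ` are integers, this size behaves like the absolute value of a discretely ordered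
ring: a division chain that climbs over a peak turns there with a quotient `0` or `±1`, so the peak
can be cut off without lengthening the chain. A shortest chain can therefore be chosen so that the
size never increases, and then it acts on leading coefficients as an integer continued fraction.
Each such step moves at most two places down the Fibonacci sequence, so a pair with leading
coefficients proportional to `(F_{2k}, F_{2k+1})` needs more than `k` steps before the degree drops.
Any nonconstant `b ∈ R_τ` is the second member of such a pair, because it is congruent to an integer
modulo `F_{2k+1}`; taking `b` of least norm among the nonconstant elements excludes every `k`-stage
norm.
-/

section DiscreteSize

variable {R α : Type*} [CommRing R] [LinearOrder α] {size : R → α} {t : α}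

/-- A size function on a ring that behaves like the absolute value of a discretely ordered ring:
`|a| < |b|` and `|a - q * b| ≤ |b|` give `|q| < 2`. -/
structure IsDiscreteSize (size : R → α) : Prop where
  size_neg (a : R) : size (-a) = size a
  quotient_eq {a b q : R} :
    size a < size b → size (a - q * b) ≤ size b → q = 0 ∨ q = 1 ∨ q = -1

/-- Some division chain of length `l` starting from `(a, b)` ends with a remainder of size
less than `t`; the recursion is on the first division step. -/
def ReducesBelow (size : R → α) (t : α) : ℕ → R → R → Prop
  | 0, _, b => size b < t
  | l + 1, a, b => ∃ q, ReducesBelow size t l b (a - q * b)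

theorem DivChain.reducesBelow {l : ℕ} {a b : R} {q s : ℕ → R} (h : DivChain a b l q s)
    (hlast : size (s (l + 1)) < t) : ReducesBelow size t l a b := by
  induction l generalizing a b q s with
  | zero => exact h.2.1 ▸ hlast
  | succ l ih =>
    obtain ⟨rfl, rfl, hstep⟩ := h
    have htail : DivChain (s 1) (s 2) l (fun i => q (i + 1)) (fun i => s (i + 1)) :=
      ⟨rfl, rfl, fun i hi => hstep (i + 1) (by lia)⟩
    have hremainder : s 0 - q 0 * s 1 = s 2 := sub_eq_of_eq_add' (hstep 0 l.succ_pos)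
    exact ⟨q 0, hremainder ▸ ih htail hlast⟩

namespace ReducesBelow

theorem add_mul {l : ℕ} {a b : R} (h : ReducesBelow size t l a b) (q : R) :
    ReducesBelow size t l (a + q * b) b := by
  cases l with
  | zero => exact h
  | succ l =>
    obtain ⟨q', h⟩ := h
    exact ⟨q' + q, by convert h using 1; ring⟩

theorem neg (hsize : IsDiscreteSize size) {l : ℕ} {a b : R} (h : ReducesBelow size t l a b) :
    ReducesBelow size t l (-a) b ∧ ReducesBelow size t l a (-b) := by
  induction l generalizing a b with
  | zero => exact ⟨h, (hsize.size_neg b).trans_lt h⟩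
  | succ l ih =>
    obtain ⟨q, h⟩ := h
    exact ⟨⟨-q, by convert (ih h).2 using 1; ring⟩, ⟨-q, by convert (ih h).1 using 1; ring⟩⟩

theorem skip_ascent (hsize : IsDiscreteSize size) {l : ℕ} {a b q : R} (hb : t ≤ size b)
    (hascent : size b < size (a - q * b)) (h : ReducesBelow size t l b (a - q * b)) :
    ∃ l' ≤ l, ReducesBelow size t l' a b := by
  induction l using Nat.strong_induction_on generalizing a b q with
  | _ l ih =>
  obtain ⟨r, rfl⟩ : ∃ r, a = r + q * b := ⟨a - q * b, by ring⟩
  rw [add_sub_cancel_right] at hascent h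
  cases l with
  | zero => exact absurd h (hb.trans hascent.le).not_gt
  | succ l =>
    obtain ⟨q', h⟩ := h
    rcases lt_or_ge (size r) (size (b - q' * r)) with hascent' | hpeak
    · obtain ⟨l', hl', h⟩ := ih l l.lt_succ_self (hb.trans hascent.le) hascent' h
      obtain ⟨l'', hl'', h⟩ := ih l' (by lia) (a := r + q * b) (q := q) hb
        (by rwa [add_sub_cancel_right]) (by rwa [add_sub_cancel_right])
      exact ⟨l'', by lia, h⟩
    · rcases hsize.quotient_eq hascent hpeak with rfl | rfl | rfl
      -- The chain peaks at `r`: absorb its quotient there into `q` and bypass `r`.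
      · rw [zero_mul, sub_zero] at h
        exact ⟨l, l.le_succ, h.add_mul q⟩
      · refine ⟨l + 1, le_rfl, q + 1, ?_⟩
        convert ((h.add_mul 1).neg hsize).2 using 1 <;> ring
      · refine ⟨l + 1, le_rfl, q - 1, ?_⟩
        convert (h.neg hsize).1.add_mul 1 using 1 <;> ring

theorem exists_nonincreasing_step (hsize : IsDiscreteSize size) {l : ℕ} {a b : R}
    (hb : t ≤ size b) (h : ReducesBelow size t l a b) :
    ∃ l' < l, ∃ q, size (a - q * b) ≤ size b ∧ ReducesBelow size t l' b (a - q * b) := by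
  induction l using Nat.strong_induction_on with
  | _ l ih =>
  cases l with
  | zero => exact absurd h hb.not_gt
  | succ l =>
    obtain ⟨q, hq⟩ := h
    rcases le_or_gt (size (a - q * b)) (size b) with hle | hascent
    · exact ⟨l, l.lt_succ_self, q, hle, hq⟩
    · obtain ⟨l', hl', h⟩ := hq.skip_ascent hsize hb hascent
      obtain ⟨l'', hl'', hstep⟩ := ih l' (by lia) h
      exact ⟨l'', by lia, hstep⟩

end ReducesBelow

end DiscreteSize

section FibPair

variable {A : Type*} [CommRing A]

/-- Up to a common nonzero factor and up to sign, `v` is the Fibonacci number `F_{m+1}` and `u`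
is congruent to `F_m` modulo the integer multiples of `v`; thus `u / v` has the continued fraction
expansion of `F_m / F_{m+1}` up to sign and integer translation. -/
def IsFibPair (m : ℕ) (u v : A) : Prop :=
  ∃ μ : A, μ ≠ 0 ∧ (∃ e : ℤ, u = μ * Nat.fib m + e * v) ∧
    (v = μ * Nat.fib (m + 1) ∨ v = -(μ * Nat.fib (m + 1)))

variable [LinearOrder A] [IsStrictOrderedRing A] {m : ℕ} {u v : A}

theorem IsFibPair.right_ne_zero (h : IsFibPair m u v) : v ≠ 0 := by
  obtain ⟨μ, hμ, -, hv⟩ := h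
  have hfib : (Nat.fib (m + 1) : A) ≠ 0 := Nat.cast_ne_zero.mpr (Nat.fib_pos.mpr m.succ_pos).ne'
  rcases hv with rfl | rfl
  · exact mul_ne_zero hμ hfib
  · exact neg_ne_zero.mpr (mul_ne_zero hμ hfib)

theorem eq_zero_or_eq_neg_one_of_abs_add_mul_le {f g n : ℤ} (hf : 0 < f) (hfg : f < g)
    (h : |f + n * g| ≤ g) : n = 0 ∨ n = -1 := by
  obtain ⟨hlower, hupper⟩ := abs_le.mp h
  have hn : n < 1 := by nlinarith
  have hn' : -2 < n := by nlinarith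
  lia

theorem IsFibPair.sub_mul (h : IsFibPair (m + 2) u v) {z : ℤ} (hle : |u - z * v| ≤ |v|) :
    IsFibPair (m + 1) v (u - z * v) ∨ IsFibPair m v (u - z * v) := by
  obtain ⟨μ, hμ, ⟨e, hu⟩, hv⟩ := h
  obtain ⟨n, hw⟩ : ∃ n : ℤ, u - z * v = μ * (Nat.fib (m + 2) + n * Nat.fib (m + 3) : ℤ) := by
    rcases hv with hv | hv
    · exact ⟨e - z, by rw [hu, hv]; push_cast; ring⟩
    · exact ⟨z - e, by rw [hu, hv]; push_cast; ring⟩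
  have habs : |v| = |μ| * Nat.fib (m + 3) := by
    rcases hv with rfl | rfl <;> simp [abs_mul]
  have hn : n = 0 ∨ n = -1 := by
    rw [hw, habs, abs_mul, mul_le_mul_iff_right₀ (abs_pos.mpr hμ)] at hle
    exact eq_zero_or_eq_neg_one_of_abs_add_mul_le
      (mod_cast Nat.fib_pos.mpr (by lia)) (mod_cast Nat.fib_lt_fib_succ (by lia))
      (mod_cast hle)
  rw [hw]
  have hfib₂ : (Nat.fib (m + 2) : A) = Nat.fib m + Nat.fib (m + 1) := mod_cast Nat.fib_add_two
  have hfib₃ : (Nat.fib (m + 3) : A) = Nat.fib (m + 1) + Nat.fib (m + 2) :=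
    mod_cast Nat.fib_add_two
  rcases hn with rfl | rfl
  · left
    rcases hv with rfl | rfl
    · exact ⟨μ, hμ, ⟨1, by push_cast; linear_combination μ * hfib₃⟩,
        .inl (by push_cast; ring)⟩
    · exact ⟨-μ, neg_ne_zero.mpr hμ, ⟨-1, by push_cast; linear_combination -μ * hfib₃⟩,
        .inr (by push_cast; ring)⟩
  · right
    rcases hv with rfl | rfl
    · exact ⟨μ, hμ, ⟨-2, by push_cast; linear_combination -μ * hfib₃ + μ * hfib₂⟩,
        .inr (by push_cast; linear_combination -μ * hfib₃)⟩
    · exact ⟨-μ, neg_ne_zero.mpr hμ, ⟨2, by push_cast; linear_combination μ * hfib₃ - μ * hfib₂⟩,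
        .inl (by push_cast; linear_combination -μ * hfib₃)⟩

end FibPair

section LeadSize

variable {A : Type*} [CommRing A] {S : Subring A[X]}

theorem coeff_sub_intCast_mul (a b : S) (z : ℤ) (D : ℕ) :
    ((a - z * b : S) : A[X]).coeff D = (a : A[X]).coeff D - z * (b : A[X]).coeff D := by
  push_cast
  rw [coeff_sub, coeff_intCast_mul]

variable [LinearOrder A]

/-- The size of a polynomial: its degree, with ties broken by the absolute value of the leading
coefficient. -/
def leadSize (f : A[X]) : WithBot ℕ ×ₗ A := toLex (f.degree, |f.leadingCoeff|)

theorem leadSize_neg (f : A[X]) : leadSize (-f) = leadSize f := by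
  simp only [leadSize, degree_neg, leadingCoeff_neg, abs_neg]

variable {f g : A[X]}

theorem degree_le_of_leadSize_le (h : leadSize f ≤ leadSize g) : f.degree ≤ g.degree := by
  rcases Prod.Lex.toLex_le_toLex.mp h with hlt | ⟨heq, -⟩
  · exact hlt.le
  · exact heq.le

variable [IsStrictOrderedRing A]

theorem leadSize_lt_toLex_iff {D : WithBot ℕ} :
    leadSize f < toLex (D, (0 : A)) ↔ f.degree < D := by
  simp only [leadSize, Prod.Lex.toLex_lt_toLex, (abs_nonneg _).not_gt, and_false, or_false]

theorem abs_coeff_le_of_leadSize_le (h : leadSize f ≤ leadSize g) :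
    |f.coeff g.natDegree| ≤ |g.leadingCoeff| := by
  rcases Prod.Lex.toLex_le_toLex.mp h with hlt | ⟨heq, hle⟩
  · rw [coeff_eq_zero_of_degree_lt (hlt.trans_le degree_le_natDegree), abs_zero]
    exact abs_nonneg _
  · rwa [← natDegree_eq_of_degree_eq heq]

theorem abs_coeff_lt_of_leadSize_lt (h : leadSize f < leadSize g) :
    |f.coeff g.natDegree| < |g.leadingCoeff| := by
  rcases Prod.Lex.toLex_lt_toLex.mp h with hlt | ⟨heq, hlt⟩
  · rw [coeff_eq_zero_of_degree_lt (hlt.trans_le degree_le_natDegree), abs_zero]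
    exact abs_pos.mpr (leadingCoeff_ne_zero.mpr (ne_zero_of_degree_gt hlt))
  · rwa [← natDegree_eq_of_degree_eq heq]

theorem exists_eq_intCast_of_degree_sub_mul_le (hconst : ∀ c : A, C c ∈ S → ∃ z : ℤ, c = z)
    {a b q : S} (hb : (b : A[X]) ≠ 0) (ha : (a : A[X]).degree ≤ (b : A[X]).degree)
    (hr : ((a - q * b : S) : A[X]).degree ≤ (b : A[X]).degree) : ∃ z : ℤ, q = z := by
  have hmul : ((q : A[X]) * b).degree ≤ (b : A[X]).degree := by
    have hqb : (q : A[X]) * b = a - (a - q * b : S) := by push_cast; ring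
    exact hqb ▸ (degree_sub_le _ _).trans (max_le ha hr)
  have hq : (q : A[X]).natDegree = 0 := by
    rcases eq_or_ne (q : A[X]) 0 with hq0 | hq0
    · rw [hq0, natDegree_zero]
    · have := natDegree_le_natDegree hmul
      rw [natDegree_mul hq0 hb] at this
      lia
  have hqC := eq_C_of_natDegree_eq_zero hq
  obtain ⟨z, hz⟩ := hconst _ (hqC ▸ q.2)
  exact ⟨z, Subtype.ext (by rw [hqC, hz]; simp)⟩

theorem isDiscreteSize_leadSize (hconst : ∀ c : A, C c ∈ S → ∃ z : ℤ, c = z) :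
    IsDiscreteSize fun f : S => leadSize (f : A[X]) where
  size_neg f := leadSize_neg (f : A[X])
  quotient_eq {a b q} hab hr := by
    have hlc := abs_coeff_lt_of_leadSize_lt hab
    have hb : 0 < |(b : A[X]).leadingCoeff| := (abs_nonneg _).trans_lt hlc
    obtain ⟨z, rfl⟩ := exists_eq_intCast_of_degree_sub_mul_le hconst
      (leadingCoeff_ne_zero.mp (abs_pos.mp hb)) (degree_le_of_leadSize_le hab.le)
      (degree_le_of_leadSize_le hr)
    have hrem := abs_coeff_le_of_leadSize_le hr
    rw [coeff_sub_intCast_mul, coeff_natDegree] at hrem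
    have hz : |(z : A)| * |(b : A[X]).leadingCoeff| < 2 * |(b : A[X]).leadingCoeff| := by
      rw [← abs_mul]
      have := abs_sub_abs_le_abs_sub (z * (b : A[X]).leadingCoeff)
        ((a : A[X]).coeff (b : A[X]).natDegree)
      rw [abs_sub_comm] at this
      linarith
    have hz2 : |(z : A)| < 2 := lt_of_mul_lt_mul_right hz hb.le
    have hz3 : z = 0 ∨ z = 1 ∨ z = -1 := by
      obtain ⟨hlower, hupper⟩ := abs_lt.mp (mod_cast hz2 : |z| < 2)
      lia
    rcases hz3 with rfl | rfl | rfl <;> simp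

theorem IsFibPair.not_reducesBelow (hconst : ∀ c : A, C c ∈ S → ∃ z : ℤ, c = z)
    {D l m : ℕ} {a b : S} (hlm : 2 * l ≤ m)
    (ha : (a : A[X]).degree ≤ D) (hb : (b : A[X]).degree ≤ D)
    (hfib : IsFibPair m ((a : A[X]).coeff D) ((b : A[X]).coeff D)) :
    ¬ ReducesBelow (fun f : S => leadSize (f : A[X])) (toLex (D, 0)) l a b := by
  induction l using Nat.strong_induction_on generalizing m a b with
  | _ l ih =>
  intro hred
  have hbD : (b : A[X]).degree = D := hb.antisymm (le_degree_of_ne_zero hfib.right_ne_zero)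
  obtain ⟨l', hl', q, hle, hred⟩ := hred.exists_nonincreasing_step (isDiscreteSize_leadSize hconst)
    (not_lt.mp (leadSize_lt_toLex_iff.not.mpr hbD.not_lt))
  have hr := degree_le_of_leadSize_le hle
  obtain ⟨z, rfl⟩ := exists_eq_intCast_of_degree_sub_mul_le hconst
    (fun hb0 => hfib.right_ne_zero (by rw [hb0, coeff_zero])) (ha.trans hbD.ge) hr
  have hcoeff := abs_coeff_le_of_leadSize_le hle
  rw [leadingCoeff, natDegree_eq_of_degree_eq_some hbD, coeff_sub_intCast_mul] at hcoeff
  obtain ⟨m, rfl⟩ := Nat.exists_eq_add_of_le' (show 2 ≤ m by lia)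
  rcases hfib.sub_mul hcoeff with hfib' | hfib' <;> rw [← coeff_sub_intCast_mul] at hfib'
  · exact ih l' hl' (by lia) hb (hr.trans hb) hfib' hred
  · exact ih l' hl' (by lia) hb (hr.trans hb) hfib' hred

theorem exists_isFibPair_coeff
    (hmod : ∀ n : ℕ, n ≠ 0 → ∀ f ∈ S, ∃ g ∈ S, ∃ j : ℤ, f = n * g + j)
    {b : S} (hb : 0 < (b : A[X]).natDegree) (m : ℕ) :
    ∃ a : S, (a : A[X]).degree ≤ (b : A[X]).natDegree ∧
      IsFibPair m ((a : A[X]).coeff (b : A[X]).natDegree)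
        ((b : A[X]).coeff (b : A[X]).natDegree) := by
  set D := (b : A[X]).natDegree
  have hfib : Nat.fib (m + 1) ≠ 0 := (Nat.fib_pos.mpr m.succ_pos).ne'
  obtain ⟨g, hg, j, hbg⟩ := hmod _ hfib b b.2
  have hbcoeff : (b : A[X]).coeff D = g.coeff D * Nat.fib (m + 1) := by
    rw [hbg, coeff_add, coeff_natCast_mul, ← C_eq_intCast, coeff_C_of_ne_zero hb.ne', add_zero,
      mul_comm]
  have hgD : g.natDegree ≤ D := by
    have : g.natDegree = ((Nat.fib (m + 1) : A[X]) * g + (j : A[X])).natDegree := by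
      rw [← C_eq_intCast, natDegree_add_C, ← C_eq_natCast,
        natDegree_C_mul (Nat.cast_ne_zero.mpr hfib)]
    exact (this.trans (congrArg natDegree hbg).symm).le
  refine ⟨Nat.fib m * ⟨g, hg⟩, ?_, g.coeff D, ?_, ⟨0, ?_⟩, .inl hbcoeff⟩
  · exact natDegree_le_iff_degree_le.mp (natDegree_mul_le.trans (by simpa using hgD))
  · rintro hg0
    rw [hg0, zero_mul] at hbcoeff
    exact hb.ne' (by simp [D, leadingCoeff_eq_zero.mp hbcoeff])
  · push_cast
    rw [coeff_natCast_mul]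
    ring

theorem exists_forall_divChain_natDegree_le (hconst : ∀ c : A, C c ∈ S → ∃ z : ℤ, c = z)
    (hmod : ∀ n : ℕ, n ≠ 0 → ∀ f ∈ S, ∃ g ∈ S, ∃ j : ℤ, f = n * g + j)
    (k : ℕ) {b : S} (hb : 0 < (b : A[X]).natDegree) :
    ∃ a : S, ∀ l ≤ k, ∀ q s : ℕ → S, DivChain a b l q s →
      (b : A[X]).natDegree ≤ (s (l + 1) : A[X]).natDegree := by
  obtain ⟨a, ha, hfib⟩ := exists_isFibPair_coeff hmod hb (2 * k)
  refine ⟨a, fun l hl q s hchain => le_of_not_gt fun hlt => ?_⟩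
  refine hfib.not_reducesBelow hconst (by lia : 2 * l ≤ 2 * k) ha degree_le_natDegree
    (hchain.reducesBelow (leadSize_lt_toLex_iff.mpr ?_))
  exact degree_le_natDegree.trans_lt (mod_cast hlt)

theorem stmt_18_general (hconst : ∀ c : A, C c ∈ S → ∃ z : ℤ, c = z)
    (hmod : ∀ n : ℕ, n ≠ 0 → ∀ f ∈ S, ∃ g ∈ S, ∃ j : ℤ, f = n * g + j)
    (hnonconst : ∃ f ∈ S, 0 < f.natDegree)
    {α : Type*} [LinearOrder α] [WellFoundedLT α] (N : S → α) (k : ℕ) :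
    ¬ ∀ a b : S, b ≠ 0 → ∃ l ≤ k, ∃ q s : ℕ → S,
      DivChain a b l q s ∧ N (s (l + 1)) < N b := by
  intro hN
  have hne : {f : S | 0 < (f : A[X]).natDegree}.Nonempty :=
    let ⟨f, hf, hdeg⟩ := hnonconst
    ⟨⟨f, hf⟩, hdeg⟩
  obtain ⟨b, hb, hmin⟩ :=
    exists_minimalFor_of_wellFoundedLT (fun f : S => 0 < (f : A[X]).natDegree) N hne
  obtain ⟨a, hchain⟩ := exists_forall_divChain_natDegree_le hconst hmod k hb
  have hb0 : b ≠ 0 := by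
    rintro rfl
    exact hb.ne' natDegree_zero
  obtain ⟨l, hl, q, s, hqs, hlt⟩ := hN a b hb0
  exact hlt.not_ge (hmin (hb.trans_le (hchain l hl q s hqs)) hlt.le)

end LeadSize

section Rtau

theorem exists_int_pow_factorization_succ_dvd_sub {p n : ℕ} [Fact p.Prime] (hn : n ≠ 0)
    {x : ℤ_[p]} (hx : (p : ℤ_[p]) ^ n.factorization p ∣ x) :
    ∃ j : ℤ, (p : ℤ_[p]) ^ (n.factorization p + 1) ∣ x - n * j := by
  obtain ⟨c, rfl⟩ := hx
  set u := n / p ^ n.factorization p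
  have hnu : (n : ℤ_[p]) = p ^ n.factorization p * u :=
    mod_cast (Nat.ordProj_mul_ordCompl_eq_self n p).symm
  have hu : (u : ZMod p) ≠ 0 :=
    (ZMod.natCast_eq_zero_iff u p).not.mpr (Nat.not_dvd_ordCompl Fact.out hn)
  obtain ⟨j, hj⟩ := ZMod.intCast_surjective ((u : ZMod p)⁻¹ * PadicInt.toZMod c)
  have hdvd : (p : ℤ_[p]) ∣ c - u * j := by
    rw [← Ideal.mem_span_singleton, ← PadicInt.maximalIdeal_eq_span_p, ← PadicInt.ker_toZMod,
      RingHom.mem_ker, map_sub, map_mul, map_natCast, map_intCast, hj, mul_inv_cancel_left₀ hu,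
      sub_self]
  refine ⟨j, ?_⟩
  rw [hnu, mul_assoc, ← mul_sub, pow_succ]
  exact mul_dvd_mul_left _ hdvd

theorem dvd_of_forall_padicInt_pow_factorization_dvd {n : ℕ} (hn : n ≠ 0) {z : ℤ}
    (h : ∀ (p : ℕ) [Fact p.Prime], (p : ℤ_[p]) ^ n.factorization p ∣ z) : (n : ℤ) ∣ z := by
  rw [Int.natCast_dvd, Nat.dvd_iff_prime_pow_dvd_dvd]
  intro p e hp he
  have : Fact p.Prime := ⟨hp⟩
  have hpz : ((p ^ n.factorization p : ℕ) : ℤ) ∣ z := by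
    rw [Nat.cast_pow]
    exact (PadicInt.pow_p_dvd_int_iff _ z).mp (h p)
  exact (pow_dvd_pow p ((hp.pow_dvd_iff_le_factorization hn).mp he)).trans (Int.natCast_dvd.mp hpz)

variable (τ : ∀ p : {p : ℕ // p.Prime}, @PadicInt p.1 ⟨p.2⟩)

theorem X_mem_rtauSet : (X : ℚ[X]) ∈ RtauSet τ :=
  ⟨X, 1, one_ne_zero, by simp, fun p => by simp⟩

variable {τ}

theorem eq_intCast_of_C_mem_rtauSet {c : ℚ} (hc : C c ∈ RtauSet τ) : ∃ z : ℤ, c = z := by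
  obtain ⟨h, n, hn, hnc, hdvd⟩ := hc
  have hdeg : h.natDegree = 0 := by
    rw [← natDegree_map_eq_of_injective (algebraMap ℤ ℚ).injective_int h, ← hnc, ← C_mul,
      natDegree_C]
  obtain ⟨z, rfl⟩ : ∃ z, h = C z := ⟨_, eq_C_of_natDegree_eq_zero hdeg⟩
  rw [map_C, ← C_mul, C_inj] at hnc
  obtain ⟨w, rfl⟩ := dvd_of_forall_padicInt_pow_factorization_dvd hn (z := z)
    fun p hp => by simpa using hdvd ⟨p, hp.out⟩
  refine ⟨w, mul_left_cancel₀ (Nat.cast_ne_zero.mpr hn) (hnc.trans ?_)⟩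
  simp

theorem exists_mem_rtauSet_eq_prime_mul_add {f : ℚ[X]} (hf : f ∈ RtauSet τ) {p : ℕ}
    (hp : p.Prime) : ∃ g ∈ RtauSet τ, ∃ j : ℤ, f = p * g + j := by
  obtain ⟨h, n, hn, hnf, hdvd⟩ := hf
  have : Fact p.Prime := ⟨hp⟩
  obtain ⟨j, hj⟩ := exists_int_pow_factorization_succ_dvd_sub hn (hdvd ⟨p, hp⟩)
  have hpC : (p : ℚ[X]) * C (p : ℚ)⁻¹ = 1 := by
    rw [← C_eq_natCast, ← C_mul, mul_inv_cancel₀ (Nat.cast_ne_zero.mpr hp.ne_zero), C_1]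
  refine ⟨C (p : ℚ)⁻¹ * (f - j),
    ⟨h - n * j, n * p, mul_ne_zero hn hp.ne_zero, ?_, fun q => ?_⟩, j, ?_⟩
  · rw [Polynomial.map_sub, ← hnf, Polynomial.map_mul, Polynomial.map_natCast,
      Polynomial.map_intCast, C_eq_natCast, C_eq_natCast, Nat.cast_mul]
    linear_combination (n : ℚ[X]) * (f - j) * hpC
  · have : Fact q.1.Prime := ⟨q.2⟩
    have heval : aeval (τ q) (h - (n * j : ℤ[X])) = aeval (τ q) h - n * j := by simp
    change (q.1 : ℤ_[q.1]) ^ _ ∣ _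
    rw [Nat.factorization_mul hn hp.ne_zero, Finsupp.add_apply, heval]
    rcases eq_or_ne q ⟨p, hp⟩ with rfl | hqp
    · rwa [hp.factorization_self]
    · rw [hp.factorization, Finsupp.single_eq_of_ne (Subtype.coe_ne_coe.mpr hqp), add_zero]
      have hqn : (q.1 : ℤ_[q.1]) ^ n.factorization q.1 ∣ n :=
        mod_cast Nat.cast_dvd_cast (α := ℤ_[q.1]) (Nat.ordProj_dvd n q.1)
      exact dvd_sub (hdvd q) (hqn.mul_right _)
  · linear_combination -(f - j) * hpC

theorem exists_mem_rtauSet_eq_natCast_mul_add {n : ℕ} (hn : n ≠ 0) {f : ℚ[X]}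
    (hf : f ∈ RtauSet τ) : ∃ g ∈ RtauSet τ, ∃ j : ℤ, f = n * g + j := by
  induction n using induction_on_primes with
  | zero => exact absurd rfl hn
  | one => exact ⟨f, hf, 0, by simp⟩
  | prime_mul p n hp ih =>
    obtain ⟨g, hg, j, rfl⟩ := ih (right_ne_zero_of_mul hn)
    obtain ⟨g', hg', j', rfl⟩ := exists_mem_rtauSet_eq_prime_mul_add hg hp
    exact ⟨g', hg', n * j' + j, by push_cast; ring⟩

end Rtau

/-- For every `τ` and every positive integer `k`, the ring `R_τ` is not `k`-stage
Euclidean with respect to any norm. -/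
theorem stmt_18 (τ : ∀ p : {p : ℕ // p.Prime}, @PadicInt p.1 ⟨p.2⟩)
    (S : Subring (Polynomial ℚ)) (hS : (S : Set (Polynomial ℚ)) = RtauSet τ)
    (k : ℕ) (hk : 1 ≤ k) :
    ¬ ∃ N : S → ℕ, (∀ a : S, N a = 0 ↔ a = 0) ∧
      ∀ a b : S, b ≠ 0 → ∃ l : ℕ, 1 ≤ l ∧ l ≤ k ∧ ∃ q s : ℕ → S,
        DivChain a b l q s ∧ N (s (l + 1)) < N b := by
  rintro ⟨N, -, hN⟩
  exact stmt_18_general (fun c hc => eq_intCast_of_C_mem_rtauSet (hS.subset hc))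
    (fun n hn f hf =>
      let ⟨g, hg, hfg⟩ := exists_mem_rtauSet_eq_natCast_mul_add hn (hS.subset hf)
      ⟨g, hS.superset hg, hfg⟩)
    ⟨X, hS.superset (X_mem_rtauSet τ), by simp⟩ N k
    fun a b hb => (hN a b hb).imp fun l hl => hl.2
end
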